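/- arXiv:1607.07580 — 4 statements merged into one kernel-verified Lean document; each statement's English description precedes it below -/
import Mathlib

section
/- Let n ≥ 2, α ∈ (0,1), 1 ≤ p < n/α and 0 ≤ μ < C_{n,α,p}. Then for every u ∈ C_c^∞(ℝⁿ), (1 − μ/C_{n,α,p}) ∫_{ℝⁿ}∫_{ℝⁿ} |u(x)−u(y)|^p / |x−y|^{n+pα} dx dy ≤ ∫_{ℝⁿ}∫_{ℝⁿ} |u(x)−u(y)|^p / |x−y|^{n+pα} dx dy − μ ∫_{ℝⁿ} |u(x)|^p / |x|^{pα} dx ≤ ∫_{ℝⁿ}∫_{ℝⁿ} |u(x)−u(y)|^p / |x−y|^{n+pα} dx dy. In particular the quantity R(u)^p := [u]_{α,p}^p − μ ∫ |u|^p/|x|^{pα} dx is comparable to the Gagliardo seminorm [u]_{α,p}^p. -/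
/-!
The two inequalities follow from the sharp fractional Hardy inequality
`C_{n,α,p} ∫ |u|^p / |x|^{pα} ≤ [u]_{α,p}^p` (`hardy_ineq`), multiplied by `μ / C_{n,α,p}`.

The Hardy inequality is a ground state argument. Put `γ = (n - pα)/p` and `ω(x) = |x|^{-γ}`. For
`|x| < |y|`, write `u(x)/ω(x)` as the convex combination with weights `(ω(x) - ω(y))/ω(x)` and
`ω(y)/ω(x)` of `(u(x) - u(y))/(ω(x) - ω(y))` and `u(y)/ω(y)`; convexity of `t ↦ |t|^p` gives
(`convex_ineq`)

`(ω(x) - ω(y))^{p-1} (ω(x)^{1-p} |u(x)|^p - ω(y)^{1-p} |u(y)|^p) ≤ |u(x) - u(y)|^p`.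

This is integrated against `|x - y|^{-n-pα}` over `{0 < |x| < θ|y|}` with `θ < 1`, a region
disjoint from its mirror image and invariant under rotations and dilations. By the slice formula
`lintegral_cyl`, integrating the kernel `hardyKer` in `y` or in `x` produces the weight of the Hardy
integral times a one-dimensional integral, `radA` and `radB` respectively
(`lintegral_hardyKer_right`, `lintegral_hardyKer_left`). Both contain the same angular factor
`PhiE`, and their integrands differ exactly by that of `radC`. As `θ < 1` keeps the region away
from the diagonal, `radB` is finite and can be cancelled, which leaves
`2 * radC θ * ∫ |u|^p / |x|^{pα} ≤ [u]^p` (`hardy_trunc`). Monotone convergence as `θ → 1` replaces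
`θ` by `1`, and `2 * radC 1` is at least `C_{n,α,p}` (`ofReal_hardyConst_le`).

The argument is carried out with `ℝ≥0∞`-valued integrals, where Tonelli's theorem and scaling need
no integrability. Finiteness of the Gagliardo seminorm (`gagliardo_lt_top`) transfers the result to
Bochner integrals.
-/

open MeasureTheory Filter

/-- Surface measure of the unit sphere `S^{m-1} ⊆ ℝ^m`. -/
noncomputable def sphereSurfaceArea (m : ℕ) : ℝ :=
  2 * Real.pi ^ ((m : ℝ) / 2) / Real.Gamma ((m : ℝ) / 2)

/-- `Φ_{n,α,p}(r)` from the sharp fractional Hardy inequality. -/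
noncomputable def Phi (n : ℕ) (α p r : ℝ) : ℝ :=
  sphereSurfaceArea (n - 1) *
    ∫ t in (-1 : ℝ)..1,
      (1 - t ^ 2) ^ (((n : ℝ) - 3) / 2) * (1 - 2 * r * t + r ^ 2) ^ (-(((n : ℝ) + p * α) / 2))

/-- The sharp fractional Hardy constant `C_{n,α,p}`. -/
noncomputable def hardyConst (n : ℕ) (α p : ℝ) : ℝ :=
  2 * ∫ r in (0 : ℝ)..1,
      r ^ (p * α - 1) * |1 - r ^ (((n : ℝ) - p * α) / p)| ^ p * Phi n α p r

section HardyInequality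

open Set ENNReal

local notation "𝔼" => EuclideanSpace ℝ

/-! ### Polar coordinates and the slice formula -/

theorem sphereSurfaceArea_nonneg (m : ℕ) : 0 ≤ sphereSurfaceArea m := by
  unfold sphereSurfaceArea
  rcases Nat.eq_zero_or_pos m with rfl | h
  · simp
  · have : 0 < Real.Gamma ((m : ℝ) / 2) := Real.Gamma_pos_of_pos (by positivity)
    positivity

theorem sphereSurfaceArea_pos {m : ℕ} (hm : 1 ≤ m) : 0 < sphereSurfaceArea m := by
  unfold sphereSurfaceArea
  have : 0 < Real.Gamma ((m : ℝ) / 2) := Real.Gamma_pos_of_pos (by positivity)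
  positivity

/-- The mass of the unit sphere of `ℝ^m` for the surface measure `Measure.toSphere` is the explicit Gamma
quotient `sphereSurfaceArea m`. -/
theorem toSphere_univ_eq {m : ℕ} (hm : 1 ≤ m) :
    (volume : Measure (𝔼 (Fin m))).toSphere univ = ENNReal.ofReal (sphereSurfaceArea m) := by
  have : Nonempty (Fin m) := ⟨⟨0, hm⟩⟩
  have hm' : (0 : ℝ) < m := by exact_mod_cast hm
  rw [Measure.toSphere_apply_univ, EuclideanSpace.volume_ball, finrank_euclideanSpace_fin,
    ← ENNReal.ofReal_pow zero_le_one, ← ENNReal.ofReal_mul (by positivity),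
    ← ENNReal.ofReal_natCast, ← ENNReal.ofReal_mul (by positivity)]
  congr 1
  have hG : Real.Gamma ((m : ℝ) / 2) ≠ 0 := (Real.Gamma_pos_of_pos (by positivity)).ne'
  simp only [Fintype.card_fin]
  rw [Real.Gamma_add_one (by positivity), sphereSurfaceArea, Real.sqrt_eq_rpow,
    ← Real.rpow_natCast (Real.pi ^ (1 / 2 : ℝ)), ← Real.rpow_mul Real.pi_pos.le]
  rw [show (1 / 2 : ℝ) * m = m / 2 by ring, one_pow]
  field_simp

/-- Integration of radial functions on `ℝ^m` in polar coordinates. -/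
theorem lintegral_radial {m : ℕ} (hm : 1 ≤ m) {f : ℝ → ℝ≥0∞} (hf : Measurable f) :
    ∫⁻ z : 𝔼 (Fin m), f ‖z‖ = ENNReal.ofReal (sphereSurfaceArea m) *
      ∫⁻ ρ in Ioi (0 : ℝ), ENNReal.ofReal (ρ ^ (m - 1)) * f ρ := by
  have : Nonempty (Fin m) := ⟨⟨0, hm⟩⟩
  -- The origin is a null set; its complement is the product of the sphere and the half-line.
  have h0 : ∫⁻ z : 𝔼 (Fin m), f ‖z‖ =
      ∫⁻ z : ({(0)}ᶜ : Set (𝔼 (Fin m))), f ‖z.1‖ ∂(volume.comap Subtype.val) := by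
    rw [lintegral_subtype_comap (measurableSet_singleton _).compl fun x : 𝔼 (Fin m) ↦ f (‖x‖),
        restrict_compl_singleton]
  have h1 := (volume : Measure (𝔼 (Fin m))).measurePreserving_homeomorphUnitSphereProd.lintegral_comp
        (f := f ∘ Subtype.val ∘ Prod.snd) (by fun_prop)
  simp only [Function.comp_def, homeomorphUnitSphereProd_apply_snd_coe] at h1
  rw [h0, h1, lintegral_prod _ (by fun_prop)]
  simp only [lintegral_const]
  rw [mul_comm, toSphere_univ_eq hm, finrank_euclideanSpace_fin, Measure.volumeIoiPow,
    lintegral_withDensity_eq_lintegral_mul _ (by fun_prop) (by fun_prop)]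
  congr 1
  exact lintegral_subtype_comap measurableSet_Ioi
    (fun ρ : ℝ => ENNReal.ofReal (ρ ^ (m - 1)) * f ρ)

/-- Tonelli's theorem for `ℝ^{m+1} = ℝ × ℝ^m`, splitting off the coordinate `0`. -/
theorem lintegral_split {m : ℕ} {F : 𝔼 (Fin (m + 1)) → ℝ≥0∞} (hF : Measurable F) :
    ∫⁻ y, F y = ∫⁻ s : ℝ, ∫⁻ z : 𝔼 (Fin m), F (WithLp.toLp 2 (Fin.cons s z.ofLp)) := by
  have e1 := PiLp.volume_preserving_toLp (Fin (m + 1))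
  have e2 := (volume_preserving_piFinSuccAbove (fun _ : Fin (m + 1) => ℝ) 0).symm
  have e3 := PiLp.volume_preserving_ofLp (Fin m)
  rw [← e1.lintegral_comp hF, ← e2.lintegral_comp (by fun_prop), Measure.volume_eq_prod, lintegral_prod _ (by fun_prop)]
  congr 1; ext s
  rw [← e3.lintegral_comp (by fun_prop)]
  congr 1; ext z
  simp [MeasurableEquiv.piFinSuccAbove]
  rfl

/-- The slice formula on `ℝ^{m+1}` for functions of `‖y‖ = ρ` and `y 0 = ρ t`. Radial integration in the
last `m` coordinates, followed by polar coordinates in the half plane of `(y 0, ‖(y 1, …, y m)‖)`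
and the substitution `t = cos θ`, produces the angular weight `|S^{m-1}| (1 - t²)^{(m-2)/2}`. -/
theorem lintegral_cyl {m : ℕ} (hm : 1 ≤ m) {F : ℝ → ℝ → ℝ≥0∞} (hF : Measurable (Function.uncurry F)) :
    ∫⁻ y : 𝔼 (Fin (m + 1)), F ‖y‖ (y 0) =
      ∫⁻ ρ in Ioi (0 : ℝ), ENNReal.ofReal (ρ ^ m) * ∫⁻ t in Ioo (-1 : ℝ) 1,
        ENNReal.ofReal (sphereSurfaceArea m * (1 - t ^ 2) ^ ((((m + 1 : ℕ) : ℝ) - 3) / 2)) *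
          F ρ (ρ * t) := by
  have hFc : ∀ {f g : ℝ × ℝ → ℝ}, Measurable f → Measurable g →
      Measurable fun q => F (f q) (g q) := fun hf hg => hF.comp (hf.prodMk hg)
  have hF1 : ∀ {f g : ℝ → ℝ}, Measurable f → Measurable g →
      Measurable fun q => F (f q) (g q) := fun hf hg => hF.comp (hf.prodMk hg)
  have hS := sphereSurfaceArea_nonneg m
  set S := sphereSurfaceArea m with hSdef
  have h0 := lintegral_split (hF.comp (by fun_prop : Measurable fun y : 𝔼 (Fin (m + 1)) => (‖y‖, y 0)))
  simp only [Function.comp_def, Function.uncurry] at h0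
  rw [h0]
  have h1 : ∀ s : ℝ, ∫⁻ z : 𝔼 (Fin m), F ‖(WithLp.toLp 2 (Fin.cons s z.ofLp) : 𝔼 (Fin (m + 1)))‖
      ((WithLp.toLp 2 (Fin.cons s z.ofLp) : 𝔼 (Fin (m + 1))) 0) =
      ∫⁻ ρ : ℝ, (Ioi (0:ℝ)).indicator (fun ρ => ENNReal.ofReal (S * ρ ^ (m - 1)) * F (√(s ^ 2 + ρ ^ 2)) s) ρ := by
    intro s
    have : ∀ z : 𝔼 (Fin m), F ‖(WithLp.toLp 2 (Fin.cons s z.ofLp) : 𝔼 (Fin (m + 1)))‖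
      ((WithLp.toLp 2 (Fin.cons s z.ofLp) : 𝔼 (Fin (m + 1))) 0) = F (√(s ^ 2 + ‖z‖ ^ 2)) s := by
      intro z
      congr 1
      rw [EuclideanSpace.norm_eq, EuclideanSpace.real_norm_sq_eq, Fin.sum_univ_succ]
      simp
    simp_rw [this]
    rw [lintegral_radial hm (f := fun ρ => F (√(s ^ 2 + ρ ^ 2)) s) (hF1 (by fun_prop) (by fun_prop)),
      lintegral_indicator measurableSet_Ioi, ← lintegral_const_mul]
    · congr 1; ext ρ
      rw [ENNReal.ofReal_mul hS, mul_assoc]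
    · exact Measurable.mul (by fun_prop) (hF1 (by fun_prop) (by fun_prop))
  simp_rw [h1]
  have hmeas : Measurable fun q : ℝ × ℝ => (Ioi (0:ℝ)).indicator
      (fun ρ => ENNReal.ofReal (S * ρ ^ (m - 1)) * F (√(q.1 ^ 2 + ρ ^ 2)) q.1) q.2 := by
    have : Measurable ((univ ×ˢ Ioi (0:ℝ)).indicator (fun q : ℝ × ℝ =>
        ENNReal.ofReal (S * q.2 ^ (m - 1)) * F (√(q.1 ^ 2 + q.2 ^ 2)) q.1)) := by
      refine Measurable.indicator ?_ (by measurability)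
      exact Measurable.mul (by fun_prop) (hFc (by fun_prop) (by fun_prop))
    convert this using 2 with q
    simp [indicator]
  rw [← lintegral_prod (fun q : ℝ × ℝ => (Ioi (0:ℝ)).indicator
      (fun ρ => ENNReal.ofReal (S * ρ ^ (m - 1)) * F (√(q.1 ^ 2 + ρ ^ 2)) q.1) q.2) hmeas.aemeasurable,
    ← Measure.volume_eq_prod, ← lintegral_comp_polarCoord_symm, polarCoord_target,
    Measure.volume_eq_prod, ← Measure.prod_restrict, lintegral_prod]
  swap
  · have hc : Measurable fun z : ℝ × ℝ => polarCoord.symm (z.1, z.2) :=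
      continuous_polarCoord_symm.measurable
    have h1 : Measurable fun z : ℝ × ℝ => ENNReal.ofReal z.1 := by fun_prop
    exact (h1.mul (hmeas.comp hc)).aemeasurable
  refine setLIntegral_congr_fun measurableSet_Ioi (fun r hr => ?_)
  have hr : 0 < r := hr
  simp only [polarCoord_symm_apply, smul_eq_mul]
  have hcos : Real.cos '' Ioo 0 Real.pi = Ioo (-1) 1 := by
    simpa using Real.cosPartialHomeomorph.image_source_eq_target
  -- Substitution `t = cos θ`, which maps `(0, π)` onto `(-1, 1)`.
  have hcov := lintegral_image_eq_lintegral_abs_deriv_mul (s := Ioo 0 Real.pi) measurableSet_Ioo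
    (f := Real.cos) (f' := fun x => - Real.sin x) (fun x _ => (Real.hasDerivAt_cos x).hasDerivWithinAt)
    (Real.injOn_cos.mono Ioo_subset_Icc_self) (fun t => ENNReal.ofReal (r ^ m) *
      (ENNReal.ofReal (S * (1 - t ^ 2) ^ ((((m + 1 : ℕ) : ℝ) - 3) / 2)) * F r (r * t)))
  rw [hcos, lintegral_const_mul] at hcov
  swap
  · exact Measurable.mul (by fun_prop) (hF1 (by fun_prop) (by fun_prop))
  rw [hcov, ← lintegral_indicator measurableSet_Ioo, ← lintegral_indicator measurableSet_Ioo]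
  congr 1; ext θ
  by_cases h1 : θ ∈ Ioo (-Real.pi) Real.pi
  swap
  · have : θ ∉ Ioo 0 Real.pi := fun h => h1 ⟨by linarith [h.1, Real.pi_pos], h.2⟩
    simp [h1, this]
  by_cases h2 : θ ∈ Ioo 0 Real.pi
  swap
  -- Angles in `(-π, 0]` give a nonpositive second coordinate and contribute nothing.
  · have h3 : θ ≤ 0 := by by_contra h; exact h2 ⟨by linarith, h1.2⟩
    have : Real.sin θ ≤ 0 := Real.sin_nonpos_of_nonpos_of_neg_pi_le h3 h1.1.le
    have h4 : ¬ 0 < r * Real.sin θ := by nlinarith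
    rw [indicator_of_mem h1, indicator_of_notMem h2, indicator_of_notMem (by simpa using h4), mul_zero]
  have hs : 0 < Real.sin θ := Real.sin_pos_of_pos_of_lt_pi h2.1 h2.2
  rw [indicator_of_mem h1, indicator_of_mem h2, indicator_of_mem (by simp; positivity)]
  have h5 : √((r * Real.cos θ) ^ 2 + (r * Real.sin θ) ^ 2) = r := by
    rw [show (r * Real.cos θ) ^ 2 + (r * Real.sin θ) ^ 2 = r ^ 2 * (Real.sin θ ^ 2 + Real.cos θ ^ 2) by ring,
      Real.sin_sq_add_cos_sq, mul_one, Real.sqrt_sq hr.le]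
  rw [h5, ← Real.sin_sq, ← Real.rpow_natCast (Real.sin θ) 2, ← Real.rpow_mul hs.le]
  rw [← mul_assoc, ← mul_assoc, ← mul_assoc, ← ENNReal.ofReal_mul hr.le, ← ENNReal.ofReal_mul (by positivity),
    ← ENNReal.ofReal_mul (by positivity)]
  congr 2
  rw [abs_neg, abs_of_pos hs]
  have : Real.sin θ ^ (((2 : ℕ) : ℝ) * ((((m + 1 : ℕ) : ℝ) - 3) / 2)) * Real.sin θ = Real.sin θ ^ (m - 1) := by
    rw [← Real.rpow_add_one hs.ne', ← Real.rpow_natCast]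
    congr 1
    push_cast [Nat.cast_sub hm]
    ring
  have h6 : r ^ m = r * r ^ (m - 1) := by rw [← pow_succ']; congr 1; omega
  rw [mul_pow, ← this, h6]
  ring

/-! ### The pointwise inequality -/

/-- Pointwise ground state inequality, with `X = ω(x)` and `Y = ω(y)`: convexity of `t ↦ t^p` applied to
`|a|/X ≤ ((X - Y)/X) (|a - b|/(X - Y)) + (Y/X) (|b|/Y)`. -/
theorem convex_ineq {p : ℝ} (hp : 1 ≤ p) {X Y : ℝ} (hY : 0 < Y) (hXY : Y < X) (a b : ℝ) :
    (X - Y) ^ (p - 1) * (X ^ (1 - p) * |a| ^ p) ≤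
      |a - b| ^ p + (X - Y) ^ (p - 1) * (Y ^ (1 - p) * |b| ^ p) := by
  have hX : 0 < X := hY.trans hXY
  have hd : 0 < X - Y := sub_pos.2 hXY
  have h1 : |a| / X ≤ ((X - Y) / X) * (|a - b| / (X - Y)) + (Y / X) * (|b| / Y) := by
    have : |a| ≤ |a - b| + |b| := by simpa using abs_add_le (a - b) b
    calc |a| / X ≤ (|a - b| + |b|) / X := by gcongr
      _ = _ := by field_simp
  have hx : |a - b| / (X - Y) ∈ Ici (0 : ℝ) := mem_Ici.2 (by positivity)
  have hy : |b| / Y ∈ Ici (0 : ℝ) := mem_Ici.2 (by positivity)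
  have h2 := (convexOn_rpow hp).2 hx hy (by positivity : 0 ≤ (X - Y) / X)
    (by positivity : 0 ≤ Y / X) (by field_simp; ring)
  simp only [smul_eq_mul] at h2
  have h3 := (Real.rpow_le_rpow (by positivity) h1 (by linarith : 0 ≤ p)).trans h2
  rw [Real.div_rpow (abs_nonneg _) hX.le, Real.div_rpow (abs_nonneg _) hd.le,
    Real.div_rpow (abs_nonneg _) hY.le] at h3
  have h4 := mul_le_mul_of_nonneg_left h3 (by positivity : 0 ≤ X * (X - Y) ^ (p - 1))
  have e : ∀ {Z : ℝ}, 0 < Z → Z ^ (1 - p) = Z / Z ^ p := fun hZ => by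
    rw [Real.rpow_sub hZ, Real.rpow_one]
  rw [e hX, e hY, Real.rpow_sub_one hd.ne'] at *
  have p1 : 0 < X ^ p := by positivity
  have p2 : 0 < Y ^ p := by positivity
  have p3 : 0 < (X - Y) ^ p := by positivity
  calc _ = _ := ?_
    _ ≤ _ := h4
    _ = _ := ?_
  · field_simp
  · field_simp

/-! ### The angular factor -/

/-- The function `Phi` as an `ℝ≥0∞`-valued integral, the surface constant being kept inside. It is `⊤` when
the integral diverges, whereas `Phi` is then `0`. -/
noncomputable def PhiE (n : ℕ) (α p r : ℝ) : ℝ≥0∞ :=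
  ∫⁻ t in Ioo (-1 : ℝ) 1, ENNReal.ofReal (sphereSurfaceArea (n - 1) * (1 - t ^ 2) ^ (((n : ℝ) - 3) / 2)) *
    ENNReal.ofReal ((1 - 2 * r * t + r ^ 2) ^ (-(((n : ℝ) + p * α) / 2)))

theorem measurable_PhiE (n : ℕ) (α p : ℝ) : Measurable (PhiE n α p) := by
  unfold PhiE
  apply Measurable.lintegral_prod_right'
    (f := fun q : ℝ × ℝ => ENNReal.ofReal (sphereSurfaceArea (n - 1) * (1 - q.2 ^ 2) ^ (((n : ℝ) - 3) / 2)) *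
    ENNReal.ofReal ((1 - 2 * q.1 * q.2 + q.1 ^ 2) ^ (-(((n : ℝ) + p * α) / 2))))
  fun_prop

/-- No integrability is needed: the Bochner integral of a non-integrable function is `0`. -/
theorem ofReal_integral_le {X : Type*} [MeasurableSpace X] {ν : Measure X} {f : X → ℝ}
    (hf : 0 ≤ᵐ[ν] f) : ENNReal.ofReal (∫ x, f x ∂ν) ≤ ∫⁻ x, ENNReal.ofReal (f x) ∂ν := by
  by_cases h : Integrable f ν
  · rw [ofReal_integral_eq_lintegral_ofReal h hf]
  · simp [integral_undef h]

theorem one_sub_pos {r t : ℝ} (ht : t ∈ Ioo (-1 : ℝ) 1) :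
    0 < 1 - 2 * r * t + r ^ 2 := by
  have := ht.2; have := ht.1
  nlinarith [sq_nonneg (r - t), mul_pos (sub_pos.2 ht.2) (by linarith [ht.1] : 0 < 1 + t)]

theorem ofReal_Phi_le (n : ℕ) (α p r : ℝ) :
    ENNReal.ofReal (Phi n α p r) ≤ PhiE n α p r := by
  unfold Phi PhiE
  rw [← intervalIntegral.integral_const_mul, intervalIntegral.integral_of_le (by norm_num),
    integral_Ioc_eq_integral_Ioo]
  have h0 : ∀ t ∈ Ioo (-1 : ℝ) 1, 0 ≤ 1 - t ^ 2 := fun t ht => by nlinarith [ht.1, ht.2]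
  have hS := sphereSurfaceArea_nonneg (n - 1)
  refine (ofReal_integral_le ?_).trans ?_
  · filter_upwards [ae_restrict_mem measurableSet_Ioo] with t ht
    have := h0 t ht
    have := one_sub_pos (r := r) ht
    simp only [Pi.zero_apply]; positivity
  · refine (setLIntegral_congr_fun measurableSet_Ioo (fun t ht => ?_)).le
    have := h0 t ht
    rw [← mul_assoc, ENNReal.ofReal_mul (by positivity)]

/-- Integral of a radial function against `‖x - y‖^{-N}`: after reflecting `x` onto the first
coordinate axis, the integrand depends only on `‖y‖` and `y 0`, so that `lintegral_cyl` applies. -/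
theorem lintegral_kernel {m : ℕ} (hm : 1 ≤ m) {h : ℝ → ℝ≥0∞} (hh : Measurable h) (N : ℝ)
    (x : 𝔼 (Fin (m + 1))) :
    ∫⁻ y : 𝔼 (Fin (m + 1)), h ‖y‖ * ENNReal.ofReal (‖x - y‖ ^ (-N)) =
      ∫⁻ ρ in Ioi (0 : ℝ), ENNReal.ofReal (ρ ^ m) * (h ρ * ∫⁻ t in Ioo (-1 : ℝ) 1,
        ENNReal.ofReal (sphereSurfaceArea m * (1 - t ^ 2) ^ ((((m + 1 : ℕ) : ℝ) - 3) / 2)) *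
          ENNReal.ofReal ((‖x‖ ^ 2 - 2 * ‖x‖ * ρ * t + ρ ^ 2) ^ (-(N / 2)))) := by
  -- The reflection `T` exchanges `x` and `‖x‖ e₀`, and preserves norms and volume.
  set e : 𝔼 (Fin (m + 1)) := EuclideanSpace.single 0 ‖x‖ with he
  have hn : ‖x‖ = ‖e‖ := by simp [he]
  set T := (ℝ ∙ (x - e))ᗮ.reflection with hT
  have hTx : T x = e := Submodule.reflection_sub hn
  have h1 : ∀ y, h ‖y‖ * ENNReal.ofReal (‖x - y‖ ^ (-N)) =
      h ‖T y‖ * ENNReal.ofReal (‖e - T y‖ ^ (-N)) := by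
    intro y
    rw [← hTx, ← map_sub, T.norm_map, T.norm_map]
  simp_rw [h1]
  rw [T.measurePreserving.lintegral_comp (f := fun y => h ‖y‖ * ENNReal.ofReal (‖e - y‖ ^ (-N)))
    (by fun_prop)]
  have h2 : ∀ y, h ‖y‖ * ENNReal.ofReal (‖e - y‖ ^ (-N)) =
      (fun ρ s => h ρ * ENNReal.ofReal ((‖x‖ ^ 2 - 2 * ‖x‖ * s + ρ ^ 2) ^ (-(N / 2)))) ‖y‖ (y 0) := by
    intro y
    simp only
    congr 2
    have h3 : ‖x‖ ^ 2 - 2 * ‖x‖ * (y 0) + ‖y‖ ^ 2 = ‖e - y‖ ^ 2 := by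
      rw [norm_sub_sq_real, ← hn, he, EuclideanSpace.inner_single_left]
      simp; ring
    rw [h3, ← Real.rpow_natCast, ← Real.rpow_mul (norm_nonneg _)]
    congr 1; push_cast; ring
  simp_rw [h2]
  rw [lintegral_cyl hm (F := fun ρ s => h ρ * ENNReal.ofReal ((‖x‖ ^ 2 - 2 * ‖x‖ * s + ρ ^ 2) ^ (-(N / 2))))
    (by unfold Function.uncurry; fun_prop)]
  congr 1; ext ρ
  rw [← lintegral_const_mul (h ρ) (by fun_prop)]
  congr 2; funext t
  rw [mul_left_comm, mul_assoc (2 * ‖x‖)]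

/-- The angular integral of `lintegral_kernel` with `‖x‖ = R` at radius `ρ = R r` is a power of `R` times
`PhiE` at `r`. -/
theorem angular_mul {m : ℕ} {α p R r : ℝ} (hR : 0 < R) :
    ∫⁻ t in Ioo (-1 : ℝ) 1,
        ENNReal.ofReal (sphereSurfaceArea m * (1 - t ^ 2) ^ ((((m + 1 : ℕ) : ℝ) - 3) / 2)) *
          ENNReal.ofReal ((R ^ 2 - 2 * R * (R * r) * t + (R * r) ^ 2) ^ (-((((m + 1 : ℕ) : ℝ) + p * α) / 2))) =
      ENNReal.ofReal (R ^ (-(((m + 1 : ℕ) : ℝ) + p * α))) * PhiE (m + 1) α p r := by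
  unfold PhiE
  rw [← lintegral_const_mul _ (by fun_prop)]
  refine setLIntegral_congr_fun measurableSet_Ioo (fun t ht => ?_)
  have h0 := one_sub_pos (r := r) ht
  simp only [Nat.add_sub_cancel]
  rw [mul_left_comm (ENNReal.ofReal (R ^ _)), ← ENNReal.ofReal_mul (p := R ^ _) (by positivity),
    show R ^ 2 - 2 * R * (R * r) * t + (R * r) ^ 2 = R ^ 2 * (1 - 2 * r * t + r ^ 2) by ring,
    Real.mul_rpow (by positivity) h0.le, ← Real.rpow_natCast R 2, ← Real.rpow_mul hR.le]
  congr 4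
  push_cast; ring

/-- The companion of `angular_mul` at radius `ρ = R / r`; with `r` the ratio of the smaller to the larger
radius, the same `PhiE` at `r` appears. -/
theorem angular_div {m : ℕ} {α p R r : ℝ} (hR : 0 < R) (hr : 0 < r) :
    ∫⁻ t in Ioo (-1 : ℝ) 1,
        ENNReal.ofReal (sphereSurfaceArea m * (1 - t ^ 2) ^ ((((m + 1 : ℕ) : ℝ) - 3) / 2)) *
          ENNReal.ofReal ((R ^ 2 - 2 * R * (R / r) * t + (R / r) ^ 2) ^ (-((((m + 1 : ℕ) : ℝ) + p * α) / 2))) =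
      ENNReal.ofReal ((R / r) ^ (-(((m + 1 : ℕ) : ℝ) + p * α))) * PhiE (m + 1) α p r := by
  rw [← angular_mul (by positivity)]
  have : R / r * r = R := by field_simp
  refine setLIntegral_congr_fun measurableSet_Ioo (fun t ht => ?_)
  simp only [this]
  congr 3
  ring

theorem lintegral_comp_mul' {R : ℝ} (hR : 0 < R) (θ : ℝ) (G : ℝ → ℝ≥0∞) :
    ∫⁻ ρ in Ioo 0 (R * θ), G ρ = ∫⁻ r in Ioo 0 θ, ENNReal.ofReal R * G (R * r) := by
  have := lintegral_image_eq_lintegral_abs_deriv_mul (s := Ioo 0 θ) measurableSet_Ioo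
    (f := fun r => R * r) (f' := fun _ => R)
    (fun x _ => by simpa using ((hasDerivAt_id x).const_mul R).hasDerivWithinAt)
    (by intro a _ b _ h; simpa [hR.ne'] using h) G
  rw [image_mul_left_Ioo hR, mul_zero] at this
  rw [this, abs_of_pos hR]

theorem lintegral_comp_div' {R θ : ℝ} (hR : 0 < R) (hθ : 0 < θ) (G : ℝ → ℝ≥0∞) :
    ∫⁻ ρ in Ioi (R / θ), G ρ = ∫⁻ r in Ioo 0 θ, ENNReal.ofReal (R / r ^ 2) * G (R / r) := by
  have := lintegral_image_eq_lintegral_abs_deriv_mul (s := Ioo 0 θ) measurableSet_Ioo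
    (f := fun r => R / r) (f' := fun r => - (R / r ^ 2))
    (fun x hx => by
      have := ((hasDerivAt_inv hx.1.ne').const_mul R).hasDerivWithinAt (s := Ioo 0 θ)
      simpa [div_eq_mul_inv] using this)
    (by intro a ha b hb h
        have := ha.1.ne'; have := hb.1.ne'
        simp only at h; field_simp at h; exact h.symm) G
  have him : (fun r => R / r) '' Ioo 0 θ = Ioi (R / θ) := by
    ext s; simp only [mem_image, mem_Ioo, mem_Ioi]
    constructor
    · rintro ⟨r, ⟨h1, h2⟩, rfl⟩; gcongr
    · intro h
      have hs : 0 < s := lt_trans (by positivity) h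
      refine ⟨R / s, ⟨by positivity, ?_⟩, by field_simp⟩
      rw [div_lt_iff₀ hs]; rw [div_lt_iff₀ hθ] at h; linarith
  rw [him] at this
  rw [this]
  refine setLIntegral_congr_fun measurableSet_Ioo (fun r hr => ?_)
  have := hr.1
  simp only [abs_neg]
  rw [abs_of_pos (by positivity)]

/-! ### The marginals of the Hardy kernel -/

/-- The kernel `(ω(x) - ω(y))^{p-1} |x - y|^{-n-pα}`, `ω(x) = |x|^{-γ}`, `n = m + 1`, cut off to the region
`0 < |x| < θ |y|`. -/
noncomputable def hardyKer (m : ℕ) (α p γ θ : ℝ) (x y : 𝔼 (Fin (m + 1))) : ℝ≥0∞ :=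
  if 0 < ‖x‖ ∧ ‖x‖ < θ * ‖y‖ then
    ENNReal.ofReal ((‖x‖ ^ (-γ) - ‖y‖ ^ (-γ)) ^ (p - 1)) *
      ENNReal.ofReal (‖x - y‖ ^ (-(((m + 1 : ℕ) : ℝ) + p * α))) else 0

theorem measurable_hardyKer (m : ℕ) (α p γ θ : ℝ) :
    Measurable (Function.uncurry (hardyKer m α p γ θ)) := by
  unfold hardyKer Function.uncurry
  refine Measurable.ite (p := fun q : 𝔼 (Fin (m + 1)) × 𝔼 (Fin (m + 1)) => 0 < ‖q.1‖ ∧ ‖q.1‖ < θ * ‖q.2‖)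
    ?_ (by fun_prop) (by fun_prop)
  exact (measurableSet_lt (f := fun _ => (0 : ℝ)) (g := fun q : 𝔼 (Fin (m + 1)) × 𝔼 (Fin (m + 1)) => ‖q.1‖)
      (by fun_prop) (by fun_prop)).inter
    (measurableSet_lt (f := fun q : 𝔼 (Fin (m + 1)) × 𝔼 (Fin (m + 1)) => ‖q.1‖)
      (g := fun q => θ * ‖q.2‖) (by fun_prop) (by fun_prop))

/-- The radial factor of the `y`-marginal of `hardyKer`; `r` stands for `|x| / |y|`. -/
noncomputable def radA (n : ℕ) (α p γ θ : ℝ) : ℝ≥0∞ :=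
  ∫⁻ r in Ioo 0 θ, ENNReal.ofReal (r ^ (p * α - 1) * (1 - r ^ γ) ^ (p - 1)) * PhiE n α p r

/-- The radial factor of the `x`-marginal of `hardyKer`; `r` stands for `|x| / |y|`. -/
noncomputable def radB (n : ℕ) (α p γ θ : ℝ) : ℝ≥0∞ :=
  ∫⁻ r in Ioo 0 θ, ENNReal.ofReal (r ^ (p * α - 1 + γ) * (1 - r ^ γ) ^ (p - 1)) * PhiE n α p r

/-- Half of the sharp Hardy constant restricted to ratios `r < θ`, when `γ = (n - pα)/p`. -/
noncomputable def radC (n : ℕ) (α p γ θ : ℝ) : ℝ≥0∞ :=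
  ∫⁻ r in Ioo 0 θ, ENNReal.ofReal (r ^ (p * α - 1) * (1 - r ^ γ) ^ p) * PhiE n α p r

theorem one_sub_rpow_pos {r γ : ℝ} (h0 : 0 < r) (h1 : r < 1) (hγ : 0 < γ) : 0 < 1 - r ^ γ :=
  sub_pos.2 (Real.rpow_lt_one h0.le h1 hγ)

theorem radA_eq (n : ℕ) (α p γ θ : ℝ) (hγ : 0 < γ) (hθ : θ ≤ 1) :
    radA n α p γ θ = radB n α p γ θ + radC n α p γ θ := by
  unfold radA radB radC
  have := measurable_PhiE n α p
  rw [← lintegral_add_left (by fun_prop)]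
  refine setLIntegral_congr_fun measurableSet_Ioo (fun r hr => ?_)
  have h0 := hr.1
  have h1 := one_sub_rpow_pos h0 (hr.2.trans_le hθ) hγ
  rw [← add_mul, ← ENNReal.ofReal_add (by positivity) (by positivity)]
  congr 2
  rw [Real.rpow_add h0, Real.rpow_sub_one h1.ne']
  field_simp
  ring

/-- The powers of `R = ‖x‖` and `r` produced by the substitution `ρ = R / r` in the `y`-marginal. -/
theorem algA {m : ℕ} {α p γ R r : ℝ} (hR : 0 < R) (h0 : 0 < r) (h1 : r < 1) (hγ : 0 < γ) :
    R / r ^ 2 * ((R / r) ^ m * ((R ^ (-γ) - (R / r) ^ (-γ)) ^ (p - 1) *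
      (R / r) ^ (-(((m + 1 : ℕ) : ℝ) + p * α)))) =
    R ^ (-(p * α) - γ * (p - 1)) * (r ^ (p * α - 1) * (1 - r ^ γ) ^ (p - 1)) := by
  have h2 := one_sub_rpow_pos h0 h1 hγ
  have e1 : R ^ (-γ) - (R / r) ^ (-γ) = R ^ (-γ) * (1 - r ^ γ) := by
    rw [Real.div_rpow hR.le h0.le, Real.rpow_neg h0.le, div_inv_eq_mul]; ring
  rw [e1, Real.mul_rpow (by positivity) h2.le, ← Real.rpow_mul hR.le, Real.div_rpow hR.le h0.le,
    Real.rpow_neg h0.le, div_inv_eq_mul]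
  have e2 : R ^ (-(p * α) - γ * (p - 1)) =
      R * R ^ m * R ^ (-γ * (p - 1)) * R ^ (-(((m + 1 : ℕ) : ℝ) + p * α)) := by
    rw [← pow_succ', ← Real.rpow_natCast, ← Real.rpow_add hR, ← Real.rpow_add hR]
    congr 1; ring
  have e3 : r ^ (((m + 1 : ℕ) : ℝ) + p * α) = r ^ (p * α - 1) * r ^ 2 * r ^ m := by
    rw [mul_assoc, ← pow_add, ← Real.rpow_natCast, ← Real.rpow_add h0]
    congr 1; push_cast; ring
  rw [e2, e3, div_pow]
  field_simp

/-- The powers of `R = ‖y‖` and `r` produced by the substitution `ρ = R r` in the `x`-marginal. The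
value of `γ` turns the power `m - γ(p - 1)` of `r` into the power `pα - 1 + γ` of `radB`. -/
theorem algB {m : ℕ} {α p γ R r : ℝ} (hR : 0 < R) (h0 : 0 < r) (h1 : r < 1) (hγ : 0 < γ)
    (hγp : γ * p = ((m + 1 : ℕ) : ℝ) - p * α) :
    R * ((R * r) ^ m * (((R * r) ^ (-γ) - R ^ (-γ)) ^ (p - 1) *
      R ^ (-(((m + 1 : ℕ) : ℝ) + p * α)))) =
    R ^ (-(p * α) - γ * (p - 1)) * (r ^ (p * α - 1 + γ) * (1 - r ^ γ) ^ (p - 1)) := by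
  have h2 := one_sub_rpow_pos h0 h1 hγ
  have e1 : (R * r) ^ (-γ) - R ^ (-γ) = R ^ (-γ) * (r ^ (-γ) * (1 - r ^ γ)) := by
    have : r ^ (-γ) * r ^ γ = 1 := by rw [← Real.rpow_add h0]; simp
    rw [Real.mul_rpow hR.le h0.le]; linear_combination R ^ (-γ) * this
  rw [e1, Real.mul_rpow (by positivity) (by positivity), Real.mul_rpow (by positivity) h2.le,
    ← Real.rpow_mul hR.le, ← Real.rpow_mul h0.le]
  have e2 : R ^ (-(p * α) - γ * (p - 1)) =
      R * R ^ m * R ^ (-γ * (p - 1)) * R ^ (-(((m + 1 : ℕ) : ℝ) + p * α)) := by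
    rw [← pow_succ', ← Real.rpow_natCast, ← Real.rpow_add hR, ← Real.rpow_add hR]
    congr 1; ring
  have e3 : r ^ (p * α - 1 + γ) = r ^ m * r ^ (-γ * (p - 1)) := by
    rw [← Real.rpow_natCast, ← Real.rpow_add h0]
    congr 1; push_cast at hγp; linarith
  rw [e2, e3, mul_pow]
  ring

theorem lintegral_hardyKer_right {m : ℕ} (hm : 1 ≤ m) {α p γ θ : ℝ} (hγ : 0 < γ)
    (hθ0 : 0 < θ) (hθ : θ ≤ 1) {x : 𝔼 (Fin (m + 1))} (hx : x ≠ 0) :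
    ∫⁻ y, hardyKer m α p γ θ x y =
      ENNReal.ofReal (‖x‖ ^ (-(p * α) - γ * (p - 1))) * radA (m + 1) α p γ θ := by
  have hR : 0 < ‖x‖ := norm_pos_iff.2 hx
  have := measurable_PhiE (m + 1) α p
  have hh : Measurable fun ρ : ℝ => (Ioi (‖x‖ / θ)).indicator
      (fun ρ => ENNReal.ofReal ((‖x‖ ^ (-γ) - ρ ^ (-γ)) ^ (p - 1))) ρ :=
    Measurable.indicator (by fun_prop) measurableSet_Ioi
  have h1 : ∀ y, hardyKer m α p γ θ x y = (fun ρ : ℝ => (Ioi (‖x‖ / θ)).indicator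
      (fun ρ => ENNReal.ofReal ((‖x‖ ^ (-γ) - ρ ^ (-γ)) ^ (p - 1))) ρ) ‖y‖ *
      ENNReal.ofReal (‖x - y‖ ^ (-(((m + 1 : ℕ) : ℝ) + p * α))) := by
    intro y
    simp only [hardyKer, indicator, mem_Ioi, hR, true_and, div_lt_iff₀ hθ0, mul_comm θ]
    split_ifs <;> simp
  simp_rw [h1]
  rw [lintegral_kernel hm hh, ← lintegral_indicator measurableSet_Ioi]
  have h2 : ∀ ρ : ℝ, (Ioi (0:ℝ)).indicator (fun ρ => ENNReal.ofReal (ρ ^ m) * ((Ioi (‖x‖ / θ)).indicator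
      (fun ρ => ENNReal.ofReal ((‖x‖ ^ (-γ) - ρ ^ (-γ)) ^ (p - 1))) ρ * ∫⁻ t in Ioo (-1 : ℝ) 1,
        ENNReal.ofReal (sphereSurfaceArea m * (1 - t ^ 2) ^ ((((m + 1 : ℕ) : ℝ) - 3) / 2)) *
          ENNReal.ofReal ((‖x‖ ^ 2 - 2 * ‖x‖ * ρ * t + ρ ^ 2) ^ (-((((m + 1 : ℕ) : ℝ) + p * α) / 2))))) ρ =
      (Ioi (‖x‖ / θ)).indicator (fun ρ => ENNReal.ofReal (ρ ^ m) *
      (ENNReal.ofReal ((‖x‖ ^ (-γ) - ρ ^ (-γ)) ^ (p - 1)) * ∫⁻ t in Ioo (-1 : ℝ) 1,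
        ENNReal.ofReal (sphereSurfaceArea m * (1 - t ^ 2) ^ ((((m + 1 : ℕ) : ℝ) - 3) / 2)) *
          ENNReal.ofReal ((‖x‖ ^ 2 - 2 * ‖x‖ * ρ * t + ρ ^ 2) ^ (-((((m + 1 : ℕ) : ℝ) + p * α) / 2))))) ρ := by
    intro ρ
    by_cases hρ : ‖x‖ / θ < ρ
    · have : 0 < ρ := lt_trans (by positivity) hρ
      simp [indicator, hρ, this]
    · simp [indicator, hρ]
  simp_rw [h2]
  rw [lintegral_indicator measurableSet_Ioi, lintegral_comp_div' hR hθ0, radA,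
    ← lintegral_const_mul _ (by fun_prop)]
  refine setLIntegral_congr_fun measurableSet_Ioo (fun r hr => ?_)
  have h0 := hr.1
  have h3 := hr.2.trans_le hθ
  have h4 : 0 ≤ ‖x‖ ^ (-γ) - (‖x‖ / r) ^ (-γ) := by
    rw [sub_nonneg]
    exact Real.rpow_le_rpow_of_nonpos hR (by rw [le_div_iff₀ h0]; nlinarith) (by linarith)
  rw [angular_div hR h0, ← mul_assoc (ENNReal.ofReal (_ ^ (p - 1))), ← ENNReal.ofReal_mul (by positivity),
    ← mul_assoc (ENNReal.ofReal (_ ^ m)), ← ENNReal.ofReal_mul (by positivity),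
    ← mul_assoc, ← ENNReal.ofReal_mul (by positivity), algA hR h0 h3 hγ,
    ENNReal.ofReal_mul (by positivity), mul_assoc]

theorem lintegral_hardyKer_left {m : ℕ} (hm : 1 ≤ m) {α p γ θ : ℝ} (hγ : 0 < γ)
    (hγp : γ * p = ((m + 1 : ℕ) : ℝ) - p * α)
    (hθ : θ ≤ 1) {y : 𝔼 (Fin (m + 1))} (hy : y ≠ 0) :
    ∫⁻ x, hardyKer m α p γ θ x y =
      ENNReal.ofReal (‖y‖ ^ (-(p * α) - γ * (p - 1))) * radB (m + 1) α p γ θ := by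
  have hR : 0 < ‖y‖ := norm_pos_iff.2 hy
  have := measurable_PhiE (m + 1) α p
  have hh : Measurable fun ρ : ℝ => (Ioo 0 (‖y‖ * θ)).indicator
      (fun ρ => ENNReal.ofReal ((ρ ^ (-γ) - ‖y‖ ^ (-γ)) ^ (p - 1))) ρ :=
    Measurable.indicator (by fun_prop) measurableSet_Ioo
  have h1 : ∀ x, hardyKer m α p γ θ x y = (fun ρ : ℝ => (Ioo 0 (‖y‖ * θ)).indicator
      (fun ρ => ENNReal.ofReal ((ρ ^ (-γ) - ‖y‖ ^ (-γ)) ^ (p - 1))) ρ) ‖x‖ *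
      ENNReal.ofReal (‖y - x‖ ^ (-(((m + 1 : ℕ) : ℝ) + p * α))) := by
    intro x
    simp only [hardyKer, indicator, mem_Ioo, mul_comm θ, norm_sub_rev y x]
    split_ifs <;> simp
  simp_rw [h1]
  rw [lintegral_kernel hm hh, ← lintegral_indicator measurableSet_Ioi]
  have h2 : ∀ ρ : ℝ, (Ioi (0:ℝ)).indicator (fun ρ => ENNReal.ofReal (ρ ^ m) * ((Ioo 0 (‖y‖ * θ)).indicator
      (fun ρ => ENNReal.ofReal ((ρ ^ (-γ) - ‖y‖ ^ (-γ)) ^ (p - 1))) ρ * ∫⁻ t in Ioo (-1 : ℝ) 1,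
        ENNReal.ofReal (sphereSurfaceArea m * (1 - t ^ 2) ^ ((((m + 1 : ℕ) : ℝ) - 3) / 2)) *
          ENNReal.ofReal ((‖y‖ ^ 2 - 2 * ‖y‖ * ρ * t + ρ ^ 2) ^ (-((((m + 1 : ℕ) : ℝ) + p * α) / 2))))) ρ =
      (Ioo 0 (‖y‖ * θ)).indicator (fun ρ => ENNReal.ofReal (ρ ^ m) *
      (ENNReal.ofReal ((ρ ^ (-γ) - ‖y‖ ^ (-γ)) ^ (p - 1)) * ∫⁻ t in Ioo (-1 : ℝ) 1,
        ENNReal.ofReal (sphereSurfaceArea m * (1 - t ^ 2) ^ ((((m + 1 : ℕ) : ℝ) - 3) / 2)) *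
          ENNReal.ofReal ((‖y‖ ^ 2 - 2 * ‖y‖ * ρ * t + ρ ^ 2) ^ (-((((m + 1 : ℕ) : ℝ) + p * α) / 2))))) ρ := by
    intro ρ
    by_cases hρ : ρ ∈ Ioo 0 (‖y‖ * θ)
    · simp only [indicator_of_mem hρ, indicator_of_mem (show ρ ∈ Ioi (0:ℝ) from hρ.1)]
    · by_cases h : 0 < ρ <;> simp [indicator_of_notMem hρ]
  simp_rw [h2]
  rw [lintegral_indicator measurableSet_Ioo, lintegral_comp_mul' hR, radB,
    ← lintegral_const_mul _ (by fun_prop)]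
  refine setLIntegral_congr_fun measurableSet_Ioo (fun r hr => ?_)
  have h0 := hr.1
  have h3 := hr.2.trans_le hθ
  have h4 : 0 ≤ (‖y‖ * r) ^ (-γ) - ‖y‖ ^ (-γ) := by
    rw [sub_nonneg]
    exact Real.rpow_le_rpow_of_nonpos (by positivity) (by nlinarith) (by linarith)
  rw [angular_mul hR, ← mul_assoc (ENNReal.ofReal (_ ^ (p - 1))), ← ENNReal.ofReal_mul (by positivity),
    ← mul_assoc (ENNReal.ofReal (_ ^ m)), ← ENNReal.ofReal_mul (by positivity),
    ← mul_assoc, ← ENNReal.ofReal_mul (by positivity), algB hR h0 h3 hγ hγp,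
    ENNReal.ofReal_mul (by positivity), mul_assoc]

/-- Finiteness of the angular weight, read off from the finite volume of the unit ball through
`lintegral_cyl`. -/
theorem angular_total_lt_top {m : ℕ} (hm : 1 ≤ m) :
    ∫⁻ t in Ioo (-1 : ℝ) 1, ENNReal.ofReal (sphereSurfaceArea m * (1 - t ^ 2) ^ ((((m + 1 : ℕ) : ℝ) - 3) / 2))
      < ⊤ := by
  have h := lintegral_cyl hm (F := fun ρ _ => (Iio (1 : ℝ)).indicator 1 ρ)
    (Measurable.indicator measurable_const measurableSet_Iio |>.comp measurable_fst)
  have h1 : ∫⁻ y : 𝔼 (Fin (m + 1)), (Iio (1 : ℝ)).indicator (1 : ℝ → ℝ≥0∞) ‖y‖ < ⊤ := by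
    have : ∀ y : 𝔼 (Fin (m + 1)), (Iio (1 : ℝ)).indicator (1 : ℝ → ℝ≥0∞) ‖y‖ =
      (Metric.ball 0 1).indicator 1 y := by intro y; simp [indicator]
    simp_rw [this]
    rw [lintegral_indicator_one Metric.isOpen_ball.measurableSet]
    exact measure_ball_lt_top
  rw [h] at h1
  simp_rw [lintegral_mul_const _ (show Measurable fun t : ℝ => ENNReal.ofReal (sphereSurfaceArea m *
    (1 - t ^ 2) ^ ((((m + 1 : ℕ) : ℝ) - 3) / 2)) by fun_prop)] at h1
  set Z := ∫⁻ t in Ioo (-1 : ℝ) 1, ENNReal.ofReal (sphereSurfaceArea m * (1 - t ^ 2) ^ ((((m + 1 : ℕ) : ℝ) - 3) / 2))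
  by_contra hZ
  -- An infinite angular weight would make the slice formula for the unit ball infinite.
  have hZ : Z = ⊤ := not_lt_top_iff.1 hZ
  rw [hZ] at h1
  refine h1.ne (top_unique ?_)
  calc (⊤ : ℝ≥0∞) = ∫⁻ ρ in Ioo (0 : ℝ) 1, ⊤ := by simp
    _ = ∫⁻ ρ in Ioo (0 : ℝ) 1, ENNReal.ofReal (ρ ^ m) * (⊤ * (Iio 1).indicator 1 ρ) := by
      refine setLIntegral_congr_fun measurableSet_Ioo (fun r hr => ?_)
      have : 0 < r ^ m := pow_pos hr.1 m
      simp [hr.2, ENNReal.mul_top, hr.1]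
    _ ≤ _ := lintegral_mono_set Ioo_subset_Ioi_self

theorem PhiE_le {m : ℕ} {α p r θ : ℝ} (hN : 0 ≤ ((m + 1 : ℕ) : ℝ) + p * α) (h0 : 0 < r) (h1 : r < θ) (hθ : θ < 1) :
    PhiE (m + 1) α p r ≤ (∫⁻ t in Ioo (-1 : ℝ) 1, ENNReal.ofReal (sphereSurfaceArea m * (1 - t ^ 2) ^ ((((m + 1 : ℕ) : ℝ) - 3) / 2)))
      * ENNReal.ofReal (((1 - θ) ^ 2) ^ (-((((m + 1 : ℕ) : ℝ) + p * α) / 2))) := by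
  rw [← lintegral_mul_const _ (by fun_prop)]
  refine setLIntegral_mono (by fun_prop) (fun t ht => ?_)
  simp only [Nat.add_sub_cancel]
  refine mul_le_mul_right (ENNReal.ofReal_le_ofReal ?_) _
  refine Real.rpow_le_rpow_of_nonpos (pow_pos (sub_pos.2 hθ) 2) ?_ (by linarith)
  nlinarith [ht.1, ht.2, mul_pos h0 (sub_pos.2 ht.2)]

/-- For `θ < 1` the region of integration avoids the diagonal, so `PhiE` is bounded there, and
`r^{pα-1+γ}` is integrable at `0`. -/
theorem radB_lt_top {m : ℕ} (hm : 1 ≤ m) {α p γ θ : ℝ} (hα : 0 < α) (hp : 1 ≤ p) (hγ : 0 < γ)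
    (hθ0 : 0 < θ) (hθ : θ < 1) : radB (m + 1) α p γ θ < ⊤ := by
  have hpα : 0 < p * α := by positivity
  have hK := angular_total_lt_top hm
  set Z := ∫⁻ t in Ioo (-1 : ℝ) 1, ENNReal.ofReal (sphereSurfaceArea m * (1 - t ^ 2) ^ ((((m + 1 : ℕ) : ℝ) - 3) / 2)) with hZ
  set K := Z * ENNReal.ofReal (((1 - θ) ^ 2) ^ (-((((m + 1 : ℕ) : ℝ) + p * α) / 2)))
  have hKt : K < ⊤ := ENNReal.mul_lt_top hK ENNReal.ofReal_lt_top
  have hrint : IntegrableOn (fun r : ℝ => r ^ (p * α - 1 + γ)) (Ioo 0 θ) :=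
    (intervalIntegral.integrableOn_Ioo_rpow_iff hθ0).2 (by linarith)
  calc radB (m + 1) α p γ θ ≤ ∫⁻ r in Ioo 0 θ, ENNReal.ofReal (r ^ (p * α - 1 + γ)) * K := by
        unfold radB
        refine setLIntegral_mono (by fun_prop) (fun r hr => ?_)
        have h1 := one_sub_rpow_pos hr.1 (hr.2.trans hθ) hγ
        have h2 : (1 - r ^ γ) ^ (p - 1) ≤ 1 :=
          Real.rpow_le_one h1.le (by linarith [Real.rpow_nonneg hr.1.le γ]) (by linarith)
        have h3 := Real.rpow_nonneg hr.1.le (p * α - 1 + γ)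
        gcongr
        · nlinarith
        · exact PhiE_le (by positivity) hr.1 hr.2 hθ
    _ = (∫⁻ r in Ioo 0 θ, ENNReal.ofReal (r ^ (p * α - 1 + γ))) * K := lintegral_mul_const _ (by fun_prop)
    _ < ⊤ := by
        refine ENNReal.mul_lt_top ?_ hKt
        rw [← ofReal_integral_eq_lintegral_ofReal hrint]
        · exact ENNReal.ofReal_lt_top
        · filter_upwards [ae_restrict_mem measurableSet_Ioo] with r hr
          exact Real.rpow_nonneg hr.1.le _

/-! ### The truncated inequality and its limit -/

theorem ae_ne_zero (m : ℕ) : ∀ᵐ x : 𝔼 (Fin (m + 1)), x ≠ 0 := by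
  rw [ae_iff]; simp

/-- The inequality `convex_ineq` multiplied by `|x - y|^{-n-pα}`. -/
theorem hardyKer_mul_le {m : ℕ} {α p γ θ : ℝ} (hp : 1 ≤ p) (hγ : 0 < γ) (hθ : θ < 1)
    (u : 𝔼 (Fin (m + 1)) → ℝ) {x y : 𝔼 (Fin (m + 1))} (hx : 0 < ‖x‖) (hxθ : ‖x‖ < θ * ‖y‖) :
    hardyKer m α p γ θ x y * ENNReal.ofReal (‖x‖ ^ (γ * (p - 1)) * |u x| ^ p) ≤
      ENNReal.ofReal (|u x - u y| ^ p / ‖x - y‖ ^ (((m + 1 : ℕ) : ℝ) + p * α)) +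
        hardyKer m α p γ θ x y * ENNReal.ofReal (‖y‖ ^ (γ * (p - 1)) * |u y| ^ p) := by
  have hy0 : 0 ≤ ‖y‖ := norm_nonneg y
  have hxy : ‖x‖ < ‖y‖ := by nlinarith
  have hy : 0 < ‖y‖ := hx.trans hxy
  have hlt : ‖y‖ ^ (-γ) < ‖x‖ ^ (-γ) := Real.rpow_lt_rpow_of_neg hx hxy (by linarith)
  have hd := sub_pos.2 hlt
  have hc := convex_ineq hp (Real.rpow_pos_of_pos hy (-γ)) hlt (u x) (u y)
  have e : ∀ {R : ℝ}, 0 < R → (R ^ (-γ)) ^ (1 - p) = R ^ (γ * (p - 1)) := fun hR => by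
    rw [← Real.rpow_mul hR.le]; congr 1; ring
  rw [e hx, e hy] at hc
  unfold hardyKer
  rw [if_pos ⟨hx, hxθ⟩, div_eq_mul_inv, ← Real.rpow_neg (norm_nonneg _),
    ENNReal.ofReal_mul (p := |u x - u y| ^ p) (by positivity),
    mul_right_comm, mul_right_comm _ _ (ENNReal.ofReal (‖y‖ ^ _ * _)), ← add_mul]
  refine mul_le_mul_left ?_ _
  rw [← ENNReal.ofReal_mul (by positivity), ← ENNReal.ofReal_mul (by positivity),
    ← ENNReal.ofReal_add (by positivity) (by positivity)]
  exact ENNReal.ofReal_le_ofReal hc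

/-- A symmetric function has twice its integral over `P` bounded by the full integral whenever `P` is disjoint
from its mirror image. -/
theorem two_mul_lintegral_indicator_le {X : Type*} [MeasurableSpace X] {ν : Measure X} [SFinite ν]
    {f : X × X → ℝ≥0∞} (hf : Measurable f) (hfs : ∀ x y, f (x, y) = f (y, x))
    {P : Set (X × X)} (hP : MeasurableSet P) (hPs : ∀ x y, (x, y) ∈ P → (y, x) ∉ P) :
    2 * ∫⁻ x, ∫⁻ y, P.indicator f (x, y) ∂ν ∂ν ≤ ∫⁻ x, ∫⁻ y, f (x, y) ∂ν ∂ν := by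
  have hm : Measurable (P.indicator f) := hf.indicator hP
  have h1 : ∫⁻ x, ∫⁻ y, P.indicator f (x, y) ∂ν ∂ν = ∫⁻ x, ∫⁻ y, P.indicator f (y, x) ∂ν ∂ν :=
    lintegral_lintegral_swap hm.aemeasurable
  rw [two_mul]
  nth_rw 2 [h1]
  rw [← lintegral_add_left hm.lintegral_prod_right']
  refine lintegral_mono fun x => ?_
  rw [← lintegral_add_left (by fun_prop)]
  refine lintegral_mono fun y => ?_
  by_cases h1 : (x, y) ∈ P
  · rw [indicator_of_mem h1, indicator_of_notMem (hPs x y h1), add_zero]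
  · rw [indicator_of_notMem h1, zero_add, hfs x y]
    exact indicator_le_self _ _ _

/-- The Hardy inequality with the constant truncated to ratios `r < θ < 1`. -/
theorem hardy_trunc {m : ℕ} (hm : 1 ≤ m) {α p γ θ : ℝ} (hα : 0 < α) (hp : 1 ≤ p) (hγ : 0 < γ)
    (hγp : γ * p = ((m + 1 : ℕ) : ℝ) - p * α) (hθ0 : 0 < θ) (hθ : θ < 1)
    {u : 𝔼 (Fin (m + 1)) → ℝ} (hu : Measurable u)
    (hH : ∫⁻ x, ENNReal.ofReal (|u x| ^ p / ‖x‖ ^ (p * α)) ≠ ⊤) :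
    2 * (radC (m + 1) α p γ θ * ∫⁻ x, ENNReal.ofReal (|u x| ^ p / ‖x‖ ^ (p * α))) ≤
      ∫⁻ x, ∫⁻ y, ENNReal.ofReal (|u x - u y| ^ p / ‖x - y‖ ^ (((m + 1 : ℕ) : ℝ) + p * α)) := by
  obtain ⟨f, hf⟩ : ∃ f : 𝔼 (Fin (m + 1)) × 𝔼 (Fin (m + 1)) → ℝ≥0∞, f = fun q =>
    ENNReal.ofReal (|u q.1 - u q.2| ^ p / ‖q.1 - q.2‖ ^ (((m + 1 : ℕ) : ℝ) + p * α)) := ⟨_, rfl⟩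
  have hfm : Measurable f := by rw [hf]; fun_prop
  obtain ⟨P, hP⟩ : ∃ P : Set (𝔼 (Fin (m + 1)) × 𝔼 (Fin (m + 1))),
    P = {q | 0 < ‖q.1‖ ∧ ‖q.1‖ < θ * ‖q.2‖} := ⟨_, rfl⟩
  have hPmem : ∀ x y, (x, y) ∈ P ↔ 0 < ‖x‖ ∧ ‖x‖ < θ * ‖y‖ := fun x y => by rw [hP]; rfl
  have hPm : MeasurableSet P := by
    have h1 : Measurable fun q : 𝔼 (Fin (m + 1)) × 𝔼 (Fin (m + 1)) => ‖q.1‖ := by fun_prop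
    have h2 : Measurable fun q : 𝔼 (Fin (m + 1)) × 𝔼 (Fin (m + 1)) => θ * ‖q.2‖ := by fun_prop
    rw [hP]
    exact (measurableSet_lt measurable_const h1).inter (measurableSet_lt h1 h2)
  have hfPm : Measurable (P.indicator f) := hfm.indicator hPm
  -- On `P` and on its mirror image, the Gagliardo integrand is used once each.
  have hDE : 2 * ∫⁻ x, ∫⁻ y, P.indicator f (x, y) ≤ ∫⁻ x, ∫⁻ y, f (x, y) := by
    refine two_mul_lintegral_indicator_le hfm (fun x y => ?_) hPm fun x y h1 h2 => ?_
    · rw [hf]; simp only; rw [abs_sub_comm, norm_sub_rev]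
    · rw [hPmem] at h1 h2
      nlinarith [h1.1, h1.2, h2.1, h2.2]
  obtain ⟨g, hg⟩ : ∃ g : 𝔼 (Fin (m + 1)) → ℝ≥0∞,
    g = fun x => ENNReal.ofReal (‖x‖ ^ (γ * (p - 1)) * |u x| ^ p) := ⟨_, rfl⟩
  have hgm : Measurable g := by rw [hg]; fun_prop
  have hkm := measurable_hardyKer m α p γ θ
  have hkx : ∀ x, Measurable (hardyKer m α p γ θ x) := fun _ => hkm.of_uncurry_left
  have hky : ∀ y, Measurable fun x => hardyKer m α p γ θ x y := fun _ => hkm.of_uncurry_right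
  have hpt : ∀ x y, hardyKer m α p γ θ x y * g x ≤
      P.indicator f (x, y) + hardyKer m α p γ θ x y * g y := by
    intro x y
    by_cases h : (x, y) ∈ P
    · rw [indicator_of_mem h, hf, hg]
      rw [hPmem] at h
      exact hardyKer_mul_le hp hγ hθ u h.1 h.2
    · rw [hPmem] at h
      have : hardyKer m α p γ θ x y = 0 := if_neg h
      rw [this, zero_mul]
      exact zero_le
  have hw : ∀ x : 𝔼 (Fin (m + 1)), x ≠ 0 → ENNReal.ofReal (‖x‖ ^ (-(p * α) - γ * (p - 1))) * g x =
      ENNReal.ofReal (|u x| ^ p / ‖x‖ ^ (p * α)) := by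
    intro x hx
    have hR : 0 < ‖x‖ := norm_pos_iff.2 hx
    rw [hg]
    simp only
    rw [← ENNReal.ofReal_mul (by positivity), ← mul_assoc, ← Real.rpow_add hR, sub_add_cancel,
      Real.rpow_neg hR.le, mul_comm, div_eq_mul_inv]
  have hA : ∫⁻ x, ∫⁻ y, hardyKer m α p γ θ x y * g x = radA (m + 1) α p γ θ *
      ∫⁻ x, ENNReal.ofReal (|u x| ^ p / ‖x‖ ^ (p * α)) := by
    rw [← lintegral_const_mul _ (by fun_prop)]
    refine lintegral_congr_ae ?_
    filter_upwards [ae_ne_zero m] with x hx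
    rw [lintegral_mul_const _ (hkx x), lintegral_hardyKer_right hm hγ hθ0 hθ.le hx, ← hw x hx,
      mul_comm (ENNReal.ofReal _), mul_assoc]
  have hB : ∫⁻ x, ∫⁻ y, hardyKer m α p γ θ x y * g y = radB (m + 1) α p γ θ *
      ∫⁻ x, ENNReal.ofReal (|u x| ^ p / ‖x‖ ^ (p * α)) := by
    have hsw : Measurable (Function.uncurry fun x y => hardyKer m α p γ θ x y * g y) :=
      hkm.mul (hgm.comp measurable_snd)
    rw [lintegral_lintegral_swap hsw.aemeasurable, ← lintegral_const_mul _ (by fun_prop)]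
    refine lintegral_congr_ae ?_
    filter_upwards [ae_ne_zero m] with x hx
    rw [lintegral_mul_const _ (hky x), lintegral_hardyKer_left hm hγ hγp hθ.le hx, ← hw x hx,
      mul_comm (ENNReal.ofReal _), mul_assoc]
  have hAB : ∫⁻ x, ∫⁻ y, hardyKer m α p γ θ x y * g x ≤ (∫⁻ x, ∫⁻ y, P.indicator f (x, y)) +
      ∫⁻ x, ∫⁻ y, hardyKer m α p γ θ x y * g y := by
    rw [← lintegral_add_left hfPm.lintegral_prod_right']
    refine lintegral_mono fun x => ?_
    rw [← lintegral_add_left (by fun_prop)]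
    exact lintegral_mono fun y => hpt x y
  -- `radA = radB + radC`, and the finite term `radB * H` cancels.
  rw [hA, hB, radA_eq _ _ _ _ _ hγ hθ.le, add_mul, add_comm] at hAB
  have hBt := ENNReal.mul_ne_top (radB_lt_top hm hα hp hγ hθ0 hθ).ne hH
  have := (ENNReal.add_le_add_iff_right hBt).1 hAB
  have hfin : ∫⁻ x, ∫⁻ y, f (x, y) = ∫⁻ x, ∫⁻ y,
      ENNReal.ofReal (|u x - u y| ^ p / ‖x - y‖ ^ (((m + 1 : ℕ) : ℝ) + p * α)) := by rw [hf]
  rw [← hfin]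
  refine le_trans ?_ hDE
  gcongr

/-- Passage to the limit `θ → 1` by monotone convergence. -/
theorem radC_le_of_forall {n : ℕ} {α p γ : ℝ} {h E : ℝ≥0∞}
    (H : ∀ θ : ℝ, 0 < θ → θ < 1 → 2 * (radC n α p γ θ * h) ≤ E) : 2 * (radC n α p γ 1 * h) ≤ E := by
  -- The cutoffs `θ = 1 - 1 / (k + 2)` lie in `(0, 1)` for every `k`, including `k = 0`.
  have hU : Ioo (0 : ℝ) 1 = ⋃ k : ℕ, Ioo (0 : ℝ) (1 - 1 / (k + 2)) := by
    ext r
    simp only [mem_iUnion, mem_Ioo]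
    constructor
    · rintro ⟨h0, h1⟩
      obtain ⟨k, hk⟩ := exists_nat_one_div_lt (sub_pos.2 h1)
      refine ⟨k, h0, ?_⟩
      have : (1 : ℝ) / (k + 2) ≤ 1 / (k + 1) := by gcongr; norm_num
      linarith
    · rintro ⟨k, h0, h1⟩
      have : (0 : ℝ) < 1 / (k + 2) := by positivity
      exact ⟨h0, by linarith⟩
  have hmono : Monotone fun k : ℕ => Ioo (0 : ℝ) (1 - 1 / (k + 2)) := by
    intro a b hab
    refine Ioo_subset_Ioo_right ?_
    gcongr
  have hC : radC n α p γ 1 = ⨆ k : ℕ, radC n α p γ (1 - 1 / (k + 2)) := by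
    simp only [radC]
    rw [hU, setLIntegral_iUnion_of_directed _ hmono.directed_le]
  rw [hC, ENNReal.iSup_mul, ENNReal.mul_iSup]
  refine iSup_le fun k => H _ ?_ ?_
  · have : (1 : ℝ) / (k + 2) < 1 := by
      rw [div_lt_one (by positivity)]; have : (0 : ℝ) ≤ k := by positivity
      linarith
    linarith
  · have : (0 : ℝ) < 1 / (k + 2) := by positivity
    linarith

/-- Whether or not the integrals defining the Hardy constant converge, it is at most the extended
integral `2 * radC 1`. -/
theorem ofReal_hardyConst_le (n : ℕ) (α p : ℝ) (hγ : 0 < ((n : ℝ) - p * α) / p) :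
    ENNReal.ofReal (hardyConst n α p) ≤ 2 * radC n α p (((n : ℝ) - p * α) / p) 1 := by
  unfold hardyConst radC
  rw [ENNReal.ofReal_mul (by norm_num), intervalIntegral.integral_of_le zero_le_one,
    integral_Ioc_eq_integral_Ioo, ENNReal.ofReal_ofNat]
  refine mul_le_mul_right ?_ 2
  have hΦ : ∀ r, 0 ≤ Phi n α p r := by
    intro r
    refine mul_nonneg (sphereSurfaceArea_nonneg _) ?_
    refine intervalIntegral.integral_nonneg (by norm_num) fun t ht => ?_
    have h1 : 0 ≤ 1 - t ^ 2 := by nlinarith [ht.1, ht.2]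
    have h2 : 0 ≤ 1 - 2 * r * t + r ^ 2 := by nlinarith [sq_nonneg (r - t)]
    positivity
  refine (ofReal_integral_le ?_).trans ?_
  · filter_upwards [ae_restrict_mem measurableSet_Ioo] with r hr
    have := hr.1; have := hΦ r
    simp only [Pi.zero_apply]
    positivity
  · refine setLIntegral_mono' measurableSet_Ioo fun r hr => ?_
    have h0 := hr.1
    have h1 := one_sub_rpow_pos hr.1 hr.2 hγ
    rw [abs_of_pos h1, ENNReal.ofReal_mul (by positivity)]
    exact mul_le_mul_right (ofReal_Phi_le _ _ _ _) _

/-! ### Finiteness of the Gagliardo seminorm -/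

/-- The kernel majorizing the Gagliardo integrand of a bounded Lipschitz function is integrable: near `0`
because `α < 1`, at infinity because `α > 0`. -/
theorem kernel_lt_top {m : ℕ} {α p : ℝ} (hα : 0 < α) (hα1 : α < 1) (hp : 1 ≤ p) :
    ∫⁻ z : 𝔼 (Fin (m + 1)), ENNReal.ofReal ((min 1 ‖z‖) ^ p / ‖z‖ ^ (((m + 1 : ℕ) : ℝ) + p * α)) < ⊤ := by
  have hpα : 0 < p * α := by positivity
  have hfin : ∀ {s : Set ℝ} {a : ℝ}, MeasurableSet s → s ⊆ Ioi 0 → IntegrableOn (fun r : ℝ => r ^ a) s →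
      ∫⁻ r in s, ENNReal.ofReal (r ^ a) < ⊤ := by
    intro s a hs hs0 hi
    rw [← ofReal_integral_eq_lintegral_ofReal hi]
    · exact ENNReal.ofReal_lt_top
    · filter_upwards [ae_restrict_mem hs] with r hr
      exact Real.rpow_nonneg (hs0 hr).le _
  rw [lintegral_radial (Nat.le_add_left 1 m)
    (f := fun ρ => ENNReal.ofReal ((min 1 ρ) ^ p / ρ ^ (((m + 1 : ℕ) : ℝ) + p * α))) (by fun_prop)]
  refine ENNReal.mul_lt_top ENNReal.ofReal_lt_top ?_
  have hs : Ioi (0 : ℝ) = Ioo 0 1 ∪ Ici 1 := by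
    rw [Ioo_union_Ici_eq_Ioi zero_lt_one]
  have e : ∀ {r : ℝ}, 0 < r → r ^ (((m + 1 : ℕ) : ℝ) + p * α) = r ^ m * r ^ (1 + p * α) := fun hr => by
    rw [← Real.rpow_natCast, ← Real.rpow_add hr]; congr 1; push_cast; ring
  rw [hs]
  refine (lintegral_union_le _ _ _).trans_lt (ENNReal.add_lt_top.2 ⟨?_, ?_⟩)
  · have h1 := hfin (a := p - (1 + p * α)) measurableSet_Ioo Ioo_subset_Ioi_self
      ((intervalIntegral.integrableOn_Ioo_rpow_iff zero_lt_one).2 (by nlinarith))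
    convert h1 using 1
    refine setLIntegral_congr_fun measurableSet_Ioo fun r hr => ?_
    have h0 := hr.1
    rw [← ENNReal.ofReal_mul (by positivity), min_eq_right hr.2.le, Nat.add_sub_cancel, e h0,
      Real.rpow_sub h0]
    congr 1; field_simp
  · rw [Measure.restrict_congr_set Ioi_ae_eq_Ici.symm]
    have h1 := hfin (a := - (1 + p * α)) measurableSet_Ioi (Ioi_subset_Ioi zero_le_one)
      (integrableOn_Ioi_rpow_of_lt (by linarith) zero_lt_one)
    convert h1 using 1
    refine setLIntegral_congr_fun measurableSet_Ioi fun r hr => ?_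
    have h0 : 0 < r := zero_lt_one.trans hr
    have h2 : (1 : ℝ) < r := hr
    rw [← ENNReal.ofReal_mul (by positivity), min_eq_left h2.le, Nat.add_sub_cancel, e h0,
      Real.rpow_neg h0.le, Real.one_rpow]
    congr 1; field_simp

/-- The Gagliardo seminorm of a test function is finite: `u` is bounded and Lipschitz, hence
`|u x - u y| ≤ Q min(1, |x - y|)`, and the integrand vanishes unless `x` or `y` lies in the support. -/
theorem gagliardo_lt_top {m : ℕ} {α p : ℝ} (hα : 0 < α) (hα1 : α < 1) (hp : 1 ≤ p)
    {u : 𝔼 (Fin (m + 1)) → ℝ} (hu : ContDiff ℝ (⊤ : ℕ∞) u) (hsupp : HasCompactSupport u) :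
    ∫⁻ x, ∫⁻ y, ENNReal.ofReal (|u x - u y| ^ p / ‖x - y‖ ^ (((m + 1 : ℕ) : ℝ) + p * α)) < ⊤ := by
  obtain ⟨L, hL⟩ := hu.lipschitzWith_of_hasCompactSupport hsupp (by simp)
  obtain ⟨M, hM⟩ := hsupp.exists_bound_of_continuous hu.continuous
  have hM0 : 0 ≤ M := (norm_nonneg _).trans (hM 0)
  set Q : ℝ := max L (2 * M) with hQ
  have hQ0 : 0 ≤ Q := le_max_of_le_right (by linarith)
  have hdiff : ∀ x y, |u x - u y| ≤ Q * min 1 ‖x - y‖ := by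
    intro x y
    rw [mul_min_of_nonneg _ _ hQ0, mul_one]
    refine le_min ?_ ?_
    · have h1 := hM x; have h2 := hM y
      rw [Real.norm_eq_abs] at h1 h2
      exact ((abs_sub _ _).trans (by linarith)).trans (le_max_right _ _)
    · have := hL.dist_le_mul x y
      rw [Real.dist_eq, dist_eq_norm] at this
      exact this.trans (by gcongr; exact le_max_left _ _)
  set k : 𝔼 (Fin (m + 1)) → ℝ≥0∞ := fun z =>
    ENNReal.ofReal ((min 1 ‖z‖) ^ p / ‖z‖ ^ (((m + 1 : ℕ) : ℝ) + p * α)) with hk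
  have hkm : Measurable k := by simp only [hk]; fun_prop
  have hkt : ∫⁻ z, k z < ⊤ := kernel_lt_top hα hα1 hp
  set K := tsupport u
  have hKm : MeasurableSet K := (isClosed_tsupport u).measurableSet
  have hKt : volume K < ⊤ := hsupp.isCompact.measure_lt_top
  set χ : 𝔼 (Fin (m + 1)) → ℝ≥0∞ := K.indicator 1 with hχ
  have hχm : Measurable χ := measurable_one.indicator hKm
  have hχi : ∫⁻ x, χ x = volume K := lintegral_indicator_one hKm
  have hpt : ∀ x y, ENNReal.ofReal (|u x - u y| ^ p / ‖x - y‖ ^ (((m + 1 : ℕ) : ℝ) + p * α)) ≤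
      ENNReal.ofReal (Q ^ p) * (χ x * k (x - y) + χ y * k (x - y)) := by
    intro x y
    have hmain : ENNReal.ofReal (|u x - u y| ^ p / ‖x - y‖ ^ (((m + 1 : ℕ) : ℝ) + p * α)) ≤
        ENNReal.ofReal (Q ^ p) * k (x - y) := by
      have hmin : 0 ≤ min 1 ‖x - y‖ := le_min zero_le_one (norm_nonneg _)
      simp only [hk]
      rw [← ENNReal.ofReal_mul (by positivity), ← mul_div_assoc, ← Real.mul_rpow hQ0 hmin]
      have := hdiff x y
      gcongr
    rw [← add_mul]
    by_cases hx : x ∈ K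
    · refine hmain.trans (mul_le_mul_right ?_ _)
      have : χ x = 1 := by simp [hχ, hx]
      rw [this]
      calc k (x - y) = 1 * k (x - y) := (one_mul _).symm
        _ ≤ _ := by gcongr; exact le_self_add
    by_cases hy : y ∈ K
    · refine hmain.trans (mul_le_mul_right ?_ _)
      have : χ y = 1 := by simp [hχ, hy]
      rw [this]
      calc k (x - y) = 1 * k (x - y) := (one_mul _).symm
        _ ≤ _ := by gcongr; exact le_add_self
    · rw [image_eq_zero_of_notMem_tsupport hx, image_eq_zero_of_notMem_tsupport hy, sub_self,
        abs_zero, Real.zero_rpow (by linarith), zero_div]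
      simp
  have hm1 : Measurable fun q : 𝔼 (Fin (m + 1)) × 𝔼 (Fin (m + 1)) => χ q.2 * k (q.1 - q.2) := by fun_prop
  calc _ ≤ ∫⁻ x, ∫⁻ y, ENNReal.ofReal (Q ^ p) * (χ x * k (x - y) + χ y * k (x - y)) :=
        lintegral_mono fun x => lintegral_mono fun y => hpt x y
    _ = ENNReal.ofReal (Q ^ p) * (∫⁻ x, ∫⁻ y, χ x * k (x - y)) +
        ENNReal.ofReal (Q ^ p) * (∫⁻ x, ∫⁻ y, χ y * k (x - y)) := by
      rw [← mul_add, ← lintegral_add_left, ← lintegral_const_mul]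
      · refine lintegral_congr fun x => ?_
        rw [← lintegral_add_left (by fun_prop), ← lintegral_const_mul _ (by fun_prop)]
      · exact Measurable.add (Measurable.lintegral_prod_right'
          (f := fun q : 𝔼 (Fin (m + 1)) × 𝔼 (Fin (m + 1)) => χ q.1 * k (q.1 - q.2)) (by fun_prop))
          hm1.lintegral_prod_right'
      · exact Measurable.lintegral_prod_right'
          (f := fun q : 𝔼 (Fin (m + 1)) × 𝔼 (Fin (m + 1)) => χ q.1 * k (q.1 - q.2)) (by fun_prop)
    _ < ⊤ := by
      have i1 : ∫⁻ x, ∫⁻ y, χ x * k (x - y) = volume K * ∫⁻ z, k z := by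
        rw [← hχi, ← lintegral_mul_const _ hχm]
        refine lintegral_congr fun x => ?_
        rw [lintegral_const_mul _ (by fun_prop), lintegral_sub_left_eq_self k x]
      have i2 : ∫⁻ x, ∫⁻ y, χ y * k (x - y) = volume K * ∫⁻ z, k z := by
        rw [lintegral_lintegral_swap hm1.aemeasurable, ← hχi, ← lintegral_mul_const _ hχm]
        refine lintegral_congr fun x => ?_
        rw [lintegral_const_mul _ (by fun_prop), lintegral_sub_right_eq_self k x]
      rw [i1, i2]
      have := ENNReal.mul_lt_top (ENNReal.ofReal_lt_top (r := Q ^ p)) (ENNReal.mul_lt_top hKt hkt)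
      exact ENNReal.add_lt_top.2 ⟨this, this⟩

/-! ### The Hardy inequality -/

/-- The fractional Hardy inequality with constant `C_{n,α,p}`, `n = m + 1`. -/
theorem hardy_ineq {m : ℕ} (hm : 1 ≤ m) {α p : ℝ} (hα : 0 < α) (hα1 : α < 1) (hp : 1 ≤ p)
    (hpn : p < ((m + 1 : ℕ) : ℝ) / α) (hC : 0 ≤ hardyConst (m + 1) α p)
    {u : 𝔼 (Fin (m + 1)) → ℝ} (hu : ContDiff ℝ (⊤ : ℕ∞) u) (hsupp : HasCompactSupport u) :
    hardyConst (m + 1) α p * ∫ x, |u x| ^ p / ‖x‖ ^ (p * α) ≤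
      ∫ x, ∫ y, |u x - u y| ^ p / ‖x - y‖ ^ (((m + 1 : ℕ) : ℝ) + p * α) := by
  have hp0 : 0 < p := by linarith
  have hnp : p * α < ((m + 1 : ℕ) : ℝ) := (lt_div_iff₀ hα).1 hpn
  have hγ : 0 < (((m + 1 : ℕ) : ℝ) - p * α) / p := div_pos (by linarith) hp0
  have hγp : (((m + 1 : ℕ) : ℝ) - p * α) / p * p = ((m + 1 : ℕ) : ℝ) - p * α := by field_simp
  have hum : Measurable u := hu.continuous.measurable
  have hE := gagliardo_lt_top hα hα1 hp hu hsupp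
  set F : 𝔼 (Fin (m + 1)) × 𝔼 (Fin (m + 1)) → ℝ := fun q =>
    |u q.1 - u q.2| ^ p / ‖q.1 - q.2‖ ^ (((m + 1 : ℕ) : ℝ) + p * α) with hF
  have hFm : Measurable F := by simp only [hF]; fun_prop
  have hF0 : ∀ q, 0 ≤ F q := fun q => by simp only [hF]; positivity
  have hFl : ∫⁻ q, ENNReal.ofReal (F q) =
      ∫⁻ x, ∫⁻ y, ENNReal.ofReal (|u x - u y| ^ p / ‖x - y‖ ^ (((m + 1 : ℕ) : ℝ) + p * α)) := by
    rw [Measure.volume_eq_prod, lintegral_prod _ (by fun_prop)]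
  have hFi : Integrable F := by
    refine ⟨hFm.aestronglyMeasurable, ?_⟩
    rw [hasFiniteIntegral_iff_ofReal (Eventually.of_forall hF0), hFl]
    exact hE
  have hReal : ∫ x, ∫ y, |u x - u y| ^ p / ‖x - y‖ ^ (((m + 1 : ℕ) : ℝ) + p * α) =
      (∫⁻ x, ∫⁻ y, ENNReal.ofReal (|u x - u y| ^ p / ‖x - y‖ ^ (((m + 1 : ℕ) : ℝ) + p * α))).toReal := by
    rw [← hFl, ← integral_eq_lintegral_of_nonneg_ae (Eventually.of_forall hF0) hFm.aestronglyMeasurable,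
      Measure.volume_eq_prod, integral_prod F hFi]
  rw [hReal, integral_eq_lintegral_of_nonneg_ae (Eventually.of_forall fun x => by positivity)
    (Measurable.aestronglyMeasurable (by fun_prop))]
  by_cases hH : ∫⁻ x, ENNReal.ofReal (|u x| ^ p / ‖x‖ ^ (p * α)) = ⊤
  -- If the Hardy integral diverges, its Bochner value is `0`.
  · rw [hH]; simp
  have h1 := radC_le_of_forall fun θ h0 h1 => hardy_trunc hm hα hp hγ hγp h0 h1 hum hH
  rw [← mul_assoc] at h1
  have h2 := (mul_le_mul_left (ofReal_hardyConst_le (m + 1) α p hγ) _).trans h1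
  have h3 := ENNReal.toReal_mono hE.ne h2
  rwa [ENNReal.toReal_mul, ENNReal.toReal_ofReal hC] at h3

end HardyInequality

/-- For `0 ≤ μ < C_{n,α,p}`, the quantity `R(u)^p = [u]_{α,p}^p − μ∫|u|^p/|x|^{pα}` is
comparable to the Gagliardo seminorm `[u]_{α,p}^p`:
`(1 − μ/C_{n,α,p}) [u]_{α,p}^p ≤ R(u)^p ≤ [u]_{α,p}^p`. -/
theorem hardy_quadratic_comparable (n : ℕ) (hn : 2 ≤ n) (α p μ : ℝ)
    (hα : α ∈ Set.Ioo (0 : ℝ) 1) (hp : 1 ≤ p) (hpn : p < n / α)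
    (hμ0 : 0 ≤ μ) (hμ : μ < hardyConst n α p)
    (u : EuclideanSpace ℝ (Fin n) → ℝ) (hu : ContDiff ℝ (⊤ : ℕ∞) u) (hsupp : HasCompactSupport u) :
    (1 - μ / hardyConst n α p) *
          (∫ x, ∫ y, |u x - u y| ^ p / ‖x - y‖ ^ ((n : ℝ) + p * α)) ≤
        (∫ x, ∫ y, |u x - u y| ^ p / ‖x - y‖ ^ ((n : ℝ) + p * α)) -
          μ * ∫ x, |u x| ^ p / ‖x‖ ^ (p * α) ∧
      (∫ x, ∫ y, |u x - u y| ^ p / ‖x - y‖ ^ ((n : ℝ) + p * α)) -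
          μ * (∫ x, |u x| ^ p / ‖x‖ ^ (p * α)) ≤
        ∫ x, ∫ y, |u x - u y| ^ p / ‖x - y‖ ^ ((n : ℝ) + p * α) := by
  obtain ⟨m, rfl⟩ : ∃ m, n = m + 1 := ⟨n - 1, by omega⟩
  have hC : 0 < hardyConst (m + 1) α p := hμ0.trans_lt hμ
  have hH := hardy_ineq (by omega : 1 ≤ m) hα.1 hα.2 hp hpn hC.le hu hsupp
  have hI : 0 ≤ ∫ x, |u x| ^ p / ‖x‖ ^ (p * α) := integral_nonneg fun x => by positivity
  constructor
  · have h1 := mul_le_mul_of_nonneg_left hH (div_nonneg hμ0 hC.le)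
    rw [← mul_assoc, div_mul_cancel₀ _ hC.ne'] at h1
    linarith
  · have := mul_nonneg hμ0 hI
    linarith
end

section
/- Let p ≥ 2, M > 0 and ε > 0. Then for all real numbers a, b ∈ [0, M] and s, t ∈ [0, ∞), one has | a^p/(s+ε)^{p−1} − b^p/(t+ε)^{p−1} | ≤ 2p ε^{1−p} M^{p−1} |a − b| + 2(p−1) M^p ε^{−p} |s − t|. -/
/-!
Write `X = (s + ε)^(1-p)` and `Y = (t + ε)^(1-p)`. The estimate follows from the splitting
`a^p X - b^p Y = (a^p - b^p) X + b^p (X - Y)`, in which `0 ≤ X ≤ ε^(1-p)` and `0 ≤ b^p ≤ M^p`.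
By the mean value inequality, `x ↦ x^p` is `p M^(p-1)`-Lipschitz on `[0, M]`
(`abs_rpow_sub_rpow_le`) and `x ↦ x^(1-p)` is `(p-1) ε^(-p)`-Lipschitz on `[ε, ∞)`
(`abs_rpow_one_sub_sub_le`). This gives the bound without the factors `2`.
-/

lemma abs_rpow_sub_rpow_le {p M a b : ℝ} (hp : 1 ≤ p) (ha : a ∈ Set.Icc 0 M)
    (hb : b ∈ Set.Icc 0 M) : |a ^ p - b ^ p| ≤ p * M ^ (p - 1) * |a - b| := by
  refine Convex.norm_image_sub_le_of_norm_hasDerivWithin_le (f := fun x : ℝ => x ^ p)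
    (f' := fun x : ℝ => p * x ^ (p - 1)) (s := Set.Icc 0 M)
    (fun x _ => (Real.hasDerivAt_rpow_const (Or.inr hp)).hasDerivWithinAt)
    (fun x hx => ?_) (convex_Icc 0 M) hb ha
  have hx0 := Real.rpow_nonneg hx.1 (p - 1)
  rw [Real.norm_eq_abs, abs_of_nonneg (by positivity)]
  exact mul_le_mul_of_nonneg_left (Real.rpow_le_rpow hx.1 hx.2 (by linarith)) (by linarith)

lemma abs_rpow_one_sub_sub_le {p ε x y : ℝ} (hp : 1 ≤ p) (hε : 0 < ε) (hx : ε ≤ x)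
    (hy : ε ≤ y) : |x ^ (1 - p) - y ^ (1 - p)| ≤ (p - 1) * ε ^ (-p) * |x - y| := by
  refine Convex.norm_image_sub_le_of_norm_hasDerivWithin_le (f := fun z : ℝ => z ^ (1 - p))
    (f' := fun z : ℝ => (1 - p) * z ^ (1 - p - 1)) (s := Set.Ici ε)
    (fun z hz => (Real.hasDerivAt_rpow_const
      (Or.inl (hε.trans_le hz).ne')).hasDerivWithinAt)
    (fun z hz => ?_) (convex_Ici ε) hy hx
  have hz0 : 0 < z := hε.trans_le hz
  rw [Real.norm_eq_abs, abs_mul, abs_of_nonpos (by linarith : 1 - p ≤ 0),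
    abs_of_nonneg (Real.rpow_nonneg hz0.le _), neg_sub, show 1 - p - 1 = -p by ring]
  exact mul_le_mul_of_nonneg_left
    (Real.rpow_le_rpow_of_nonpos hε hz (by linarith)) (by linarith)


/-- Pointwise Lipschitz-type estimate for the quotient test function
`w = ψ^p/(u+ε)^{p−1}`: for `p ≥ 2`, `M > 0`, `ε > 0`, `a, b ∈ [0,M]` and `s, t ≥ 0`,
`|a^p/(s+ε)^{p−1} − b^p/(t+ε)^{p−1}| ≤ 2pε^{1−p}M^{p−1}|a−b| + 2(p−1)M^pε^{−p}|s−t|`. -/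
theorem quotient_test_function_estimate (p M ε : ℝ) (hp : 2 ≤ p) (hM : 0 < M) (hε : 0 < ε)
    (a b s t : ℝ) (ha : a ∈ Set.Icc 0 M) (hb : b ∈ Set.Icc 0 M) (hs : 0 ≤ s) (ht : 0 ≤ t) :
    |a ^ p / (s + ε) ^ (p - 1) - b ^ p / (t + ε) ^ (p - 1)| ≤
      2 * p * ε ^ (1 - p) * M ^ (p - 1) * |a - b| +
        2 * (p - 1) * M ^ p * ε ^ (-p) * |s - t| := by

  have hs' : ε ≤ s + ε := by linarith
  have ht' : ε ≤ t + ε := by linarith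
  have hdiv : ∀ c x : ℝ, ε ≤ x → c / x ^ (p - 1) = c * x ^ (1 - p) := fun c x hx => by
    rw [div_eq_mul_inv, ← Real.rpow_neg (hε.le.trans hx), neg_sub]
  rw [hdiv _ _ hs', hdiv _ _ ht']
  have hX0 : 0 ≤ (s + ε) ^ (1 - p) := Real.rpow_nonneg (by linarith) _
  have hX : (s + ε) ^ (1 - p) ≤ ε ^ (1 - p) :=
    Real.rpow_le_rpow_of_nonpos hε hs' (by linarith)
  have hb0 : 0 ≤ b ^ p := Real.rpow_nonneg hb.1 p
  have hbM : b ^ p ≤ M ^ p := Real.rpow_le_rpow hb.1 hb.2 (by linarith)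
  have h1 := abs_rpow_sub_rpow_le (by linarith : 1 ≤ p) ha hb
  have h2 := abs_rpow_one_sub_sub_le (by linarith : 1 ≤ p) hε hs' ht'
  rw [add_sub_add_right_eq_sub] at h2
  have hp1 : 0 ≤ p - 1 := by linarith
  have hA : 0 ≤ p * M ^ (p - 1) * |a - b| * ε ^ (1 - p) := by positivity
  have hB : 0 ≤ M ^ p * ((p - 1) * ε ^ (-p) * |s - t|) := by positivity
  calc |a ^ p * (s + ε) ^ (1 - p) - b ^ p * (t + ε) ^ (1 - p)|
      = |(a ^ p - b ^ p) * (s + ε) ^ (1 - p)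
          + b ^ p * ((s + ε) ^ (1 - p) - (t + ε) ^ (1 - p))| := by ring_nf
    _ ≤ |a ^ p - b ^ p| * (s + ε) ^ (1 - p)
          + b ^ p * |(s + ε) ^ (1 - p) - (t + ε) ^ (1 - p)| := by
        refine (abs_add_le _ _).trans_eq ?_
        rw [abs_mul, abs_mul, abs_of_nonneg hX0, abs_of_nonneg hb0]
    _ ≤ p * M ^ (p - 1) * |a - b| * ε ^ (1 - p)
          + M ^ p * ((p - 1) * ε ^ (-p) * |s - t|) := by gcongr
    _ ≤ _ := by linarith
end

section
/- (Brezis–Lieb Lemma.) Let (X, μ) be a measure space, let 1 < p < ∞, and let (f_k) be a sequence of measurable functions with f_k → f μ-almost everywhere and ‖f_k‖_{L^p(μ)} ≤ C < ∞ for all k. Then lim_{k→∞} ( ‖f_k‖_{L^p}^p − ‖f_k − f‖_{L^p}^p ) = ‖f‖_{L^p}^p. -/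
/-!
Write `g k = f k - f₀`. The heart of the matter is the elementary inequality
`||a + b|^p - |a|^p - |b|^p| ≤ ε |a|^p + K |b|^p` with `K = K(ε, p)`
(`exists_abs_rpow_add_sub_le`), which follows from convexity of `t ↦ t^p`. Taking `a = g k x` and
`b = f₀ x`, it says that the part of `||f k|^p - |g k|^p - |f₀|^p|` exceeding `ε |g k|^p` is
dominated by `K |f₀|^p`. This dominating function is integrable because `f₀ ∈ L^p` by Fatou, and
the excess tends to `0` almost everywhere, so its integral tends to `0` by dominated convergence.
The remaining part contributes at most `ε ∫ |g k|^p`, which is `O(ε)` uniformly in `k` since `g k`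
is bounded in `L^p`.
-/

open MeasureTheory Filter

/-- Convexity gives `(x + y)^p ≤ (1 - t)^(1 - p) x^p + t^(1 - p) y^p` for `x, y ≥ 0` and
`0 < t < 1`; the first coefficient is close to `1` for small `t`. -/
lemma exists_abs_add_rpow_le {p : ℝ} (hp : 1 < p) {ε : ℝ} (hε : 0 < ε) :
    ∃ K : ℝ, 0 ≤ K ∧ ∀ a b : ℝ, |a + b| ^ p ≤ (1 + ε) * |a| ^ p + K * |b| ^ p := by
  have hlim : Tendsto (fun t : ℝ => (1 - t) ^ (1 - p)) (nhdsWithin 0 (Set.Ioi 0)) (nhds 1) := by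
    have hc : ContinuousAt (fun t : ℝ => (1 - t) ^ (1 - p)) 0 :=
      ContinuousAt.rpow_const (by fun_prop) (Or.inl (by norm_num))
    have h := hc.tendsto
    simp only [sub_zero, Real.one_rpow] at h
    exact h.mono_left nhdsWithin_le_nhds
  have h1 : ∀ᶠ t : ℝ in nhdsWithin 0 (Set.Ioi 0), (1 - t) ^ (1 - p) < 1 + ε :=
    hlim.eventually (gt_mem_nhds (by linarith))
  have h2 : ∀ᶠ t : ℝ in nhdsWithin 0 (Set.Ioi 0), t ∈ Set.Ioo (0 : ℝ) 1 :=
    Ioo_mem_nhdsGT one_pos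
  obtain ⟨t, ht, ht0, ht1⟩ := (h1.and h2).exists
  have hs : 0 < 1 - t := by linarith
  refine ⟨t ^ (1 - p), by positivity, fun a b => ?_⟩
  have hconv := (convexOn_rpow hp.le).2 (x := |a| / (1 - t)) (y := |b| / t)
    (Set.mem_Ici.2 (by positivity)) (Set.mem_Ici.2 (by positivity)) hs.le ht0.le (by ring)
  have e : ∀ {s : ℝ} (_ : 0 < s) (x : ℝ), s * (|x| / s) ^ p = s ^ (1 - p) * |x| ^ p := by
    intro s hs x
    rw [Real.div_rpow (abs_nonneg _) hs.le, Real.rpow_sub hs, Real.rpow_one]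
    ring
  simp only [smul_eq_mul] at hconv
  rw [e hs, e ht0, mul_div_cancel₀ _ hs.ne', mul_div_cancel₀ _ ht0.ne'] at hconv
  calc |a + b| ^ p ≤ (|a| + |b|) ^ p :=
        Real.rpow_le_rpow (abs_nonneg _) (abs_add_le a b) (by linarith)
    _ ≤ _ := hconv
    _ ≤ _ := by gcongr

lemma exists_abs_rpow_add_sub_le {p : ℝ} (hp : 1 < p) {ε : ℝ} (hε : 0 < ε) :
    ∃ K : ℝ, 0 ≤ K ∧ ∀ a b : ℝ,
      |(|a + b| ^ p - |a| ^ p - |b| ^ p)| ≤ ε * |a| ^ p + K * |b| ^ p := by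
  set η := min 1 (ε / 2) with hη
  have hη0 : 0 < η := by positivity
  have hη1 : η ≤ 1 := min_le_left _ _
  have hη2 : η ≤ ε / 2 := min_le_right _ _
  obtain ⟨K, hK, h⟩ := exists_abs_add_rpow_le hp hη0
  refine ⟨2 * K + 1, by positivity, fun a b => ?_⟩
  have h1 := h a b
  -- the lower bound comes from writing `a = (a + b) + (-b)`
  have h2 := h (a + b) (-b)
  rw [add_neg_cancel_right, abs_neg] at h2
  have hA : 0 ≤ |a| ^ p := by positivity
  have hB : 0 ≤ |b| ^ p := by positivity
  have h3 : η * |a + b| ^ p ≤ η * ((1 + η) * |a| ^ p + K * |b| ^ p) := by gcongr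
  have h4 : η * (1 + η) * |a| ^ p ≤ ε * |a| ^ p := by
    gcongr
    nlinarith
  have h5 : η * (K * |b| ^ p) ≤ 1 * (K * |b| ^ p) := by gcongr
  have h6 : η * |a| ^ p ≤ ε * |a| ^ p := by
    gcongr
    linarith
  have h7 : 0 ≤ K * |b| ^ p := by positivity
  rw [abs_le]
  constructor <;> nlinarith

/-- Brezis–Lieb Lemma: if `f_k → f` a.e. and `‖f_k‖_{L^p} ≤ C < ∞` for all `k`
(`1 < p < ∞`), then `lim (‖f_k‖_p^p − ‖f_k − f‖_p^p) = ‖f‖_p^p`. -/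
theorem brezis_lieb {X : Type*} [MeasurableSpace X] (μ : Measure X)
    (p : ℝ) (hp1 : 1 < p) (f : ℕ → X → ℝ) (f₀ : X → ℝ)
    (hmeas : ∀ k, AEStronglyMeasurable (f k) μ)
    (hae : ∀ᵐ x ∂μ, Tendsto (fun k => f k x) atTop (nhds (f₀ x)))
    (C : ℝ) (hC : ∀ k, eLpNorm (f k) (ENNReal.ofReal p) μ ≤ ENNReal.ofReal C) :
    Tendsto (fun k => (∫ x, |f k x| ^ p ∂μ) - ∫ x, |f k x - f₀ x| ^ p ∂μ) atTop
      (nhds (∫ x, |f₀ x| ^ p ∂μ)) := by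
  have hp0 : 0 < p := by linarith
  set q := ENNReal.ofReal p with hq
  have hq0 : q ≠ 0 := by simpa [hq] using hp0
  have hqt : q ≠ ⊤ := ENNReal.ofReal_ne_top
  have hqr : q.toReal = p := ENNReal.toReal_ofReal hp0.le
  have hq1 : 1 ≤ q := by simpa [hq] using hp1.le
  have hm₀ : AEStronglyMeasurable f₀ μ := aestronglyMeasurable_of_tendsto_ae atTop hmeas hae
  have hC₀ : eLpNorm f₀ q μ ≤ ENNReal.ofReal C :=
    (Lp.eLpNorm_lim_le_liminf_eLpNorm hmeas f₀ hae).trans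
      (liminf_le_of_frequently_le' (Frequently.of_forall hC))
  have hL₀ : MemLp f₀ q μ := ⟨hm₀, hC₀.trans_lt ENNReal.ofReal_lt_top⟩
  have hL : ∀ k, MemLp (f k) q μ := fun k => ⟨hmeas k, (hC k).trans_lt ENNReal.ofReal_lt_top⟩
  have hLg : ∀ k, MemLp (fun x => f k x - f₀ x) q μ := fun k => (hL k).sub hL₀
  have hint : ∀ {g : X → ℝ}, MemLp g q μ → Integrable (fun x => |g x| ^ p) μ := by
    intro g hg
    simpa [hqr] using hg.integrable_norm_rpow hq0 hqt
  set D := ENNReal.ofReal C + ENNReal.ofReal C with hD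
  have hDt : D ≠ ⊤ := by simp [hD]
  set M := D.toReal ^ p with hM
  have hM0 : 0 ≤ M := by positivity
  have hgM : ∀ k, ∫ x, |f k x - f₀ x| ^ p ∂μ ≤ M := by
    intro k
    have h1 : eLpNorm (fun x => f k x - f₀ x) q μ ≤ D :=
      (eLpNorm_sub_le (hmeas k) hm₀ hq1).trans (add_le_add (hC k) hC₀)
    have h2 := ENNReal.toReal_mono hDt h1
    have h0 : 0 ≤ ∫ x, |f k x - f₀ x| ^ p ∂μ := integral_nonneg fun x => by positivity
    rw [(hLg k).eLpNorm_eq_integral_rpow_norm hq0 hqt, hqr] at h2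
    simp only [Real.norm_eq_abs] at h2
    rw [ENNReal.toReal_ofReal (by positivity)] at h2
    have h3 := Real.rpow_le_rpow (by positivity) h2 hp0.le
    rwa [Real.rpow_inv_rpow h0 hp0.ne'] at h3
  set G : ℕ → X → ℝ := fun k x => |(|f k x| ^ p - |f k x - f₀ x| ^ p - |f₀ x| ^ p)| with hG
  have hGi : ∀ k, Integrable (G k) μ := fun k =>
    (((hint (hL k)).sub (hint (hLg k))).sub (hint hL₀)).abs
  have hGt : ∀ᵐ x ∂μ, Tendsto (fun k => G k x) atTop (nhds 0) := by
    filter_upwards [hae] with x hx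
    have h1 : Tendsto (fun k => |f k x| ^ p) atTop (nhds (|f₀ x| ^ p)) :=
      hx.abs.rpow_const (Or.inr hp0.le)
    have h2 : Tendsto (fun k => |f k x - f₀ x| ^ p) atTop (nhds (|f₀ x - f₀ x| ^ p)) :=
      (hx.sub_const _).abs.rpow_const (Or.inr hp0.le)
    simpa [Real.zero_rpow hp0.ne'] using ((h1.sub h2).sub_const (|f₀ x| ^ p)).abs
  have hGint : Tendsto (fun k => ∫ x, G k x ∂μ) atTop (nhds 0) := by
    rw [Metric.tendsto_atTop']
    intro δ hδ
    set ε := δ / (2 * (M + 1)) with hε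
    have hε0 : 0 < ε := by positivity
    have hεM : ε * M < δ / 2 := by
      have : ε * (M + 1) = δ / 2 := by rw [hε]; field_simp
      nlinarith
    obtain ⟨K, hK, hKb⟩ := exists_abs_rpow_add_sub_le hp1 hε0
    set W : ℕ → X → ℝ := fun k x => max (G k x - ε * |f k x - f₀ x| ^ p) 0 with hW
    have hWi : ∀ k, Integrable (W k) μ := fun k =>
      ((hGi k).sub ((hint (hLg k)).const_mul ε)).pos_part
    have hWt : Tendsto (fun k => ∫ x, W k x ∂μ) atTop (nhds (∫ _, (0 : ℝ) ∂μ)) := by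
      refine tendsto_integral_of_dominated_convergence (fun x => K * |f₀ x| ^ p)
        (fun k => (hWi k).aestronglyMeasurable) ((hint hL₀).const_mul K) (fun k => ?_) ?_
      · refine Eventually.of_forall fun x => ?_
        have h := hKb (f k x - f₀ x) (f₀ x)
        rw [sub_add_cancel] at h
        have h0 : 0 ≤ W k x := le_max_right _ _
        rw [Real.norm_eq_abs, abs_of_nonneg h0]
        exact max_le (by simp only [hG]; linarith) (by positivity)
      · filter_upwards [hGt] with x hx
        refine squeeze_zero (fun k => le_max_right _ _) (fun k => ?_) hx
        refine max_le ?_ (abs_nonneg _)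
        have : 0 ≤ ε * |f k x - f₀ x| ^ p := by positivity
        linarith
    rw [integral_zero] at hWt
    obtain ⟨N, hN⟩ := eventually_atTop.1 (hWt.eventually (gt_mem_nhds (half_pos hδ)))
    refine ⟨N, fun k hk => ?_⟩
    have hle : ∫ x, G k x ∂μ ≤ ∫ x, (W k x + ε * |f k x - f₀ x| ^ p) ∂μ := by
      refine integral_mono (hGi k) ((hWi k).add ((hint (hLg k)).const_mul ε)) fun x => ?_
      have : G k x - ε * |f k x - f₀ x| ^ p ≤ W k x := le_max_left _ _
      simp only
      linarith
    rw [integral_add (hWi k) ((hint (hLg k)).const_mul ε), integral_const_mul] at hle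
    have h0 : 0 ≤ ∫ x, G k x ∂μ := integral_nonneg fun x => abs_nonneg _
    rw [Real.dist_eq, sub_zero, abs_of_nonneg h0]
    have := hN k hk.le
    have := mul_le_mul_of_nonneg_left (hgM k) hε0.le
    linarith
  rw [tendsto_iff_dist_tendsto_zero]
  refine squeeze_zero (fun k => dist_nonneg) (fun k => ?_) hGint
  have hsub : Integrable (fun x => |f k x| ^ p - |f k x - f₀ x| ^ p) μ :=
    (hint (hL k)).sub (hint (hLg k))
  rw [Real.dist_eq, ← integral_sub (hint (hL k)) (hint (hLg k)), ← integral_sub hsub (hint hL₀)]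
  exact abs_integral_le_integral_abs
end

section
/- Let n ≥ 2, α ∈ (0,1), 2 ≤ p < n/α and 0 ≤ μ < C_{n,α,p}. Let V : ℝⁿ → [0,∞) be measurable, locally integrable, and not almost everywhere zero, and suppose that either |x|^{pα} V(x) → ∞ as |x| → ∞, or there exists z ∈ ℝⁿ such that |x−z|^{pα} V(x) → ∞ as x → z. Then the infimum inf { ∫_{ℝⁿ}∫_{ℝⁿ} |u(x)−u(y)|^p/|x−y|^{n+pα} dx dy − μ ∫_{ℝⁿ} |u|^p/|x|^{pα} dx : u ∈ C_c^∞(ℝⁿ), ∫_{ℝⁿ} V |u|^p dx = 1 } equals 0, and it is not achieved. -/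
/-!
Write `n = m + 1`, `σ = pα`, `β = (n - σ)/p`, and let `G(u)` and `H(u)` be the Gagliardo energy
and the Hardy integral of `u`. Two facts give the theorem.

*Strict positivity.* The sharp Hardy inequality `C_{n,α,p} H(u) ≤ G(u)` (`FracHardy.hardy`) gives
`G(u) - μ H(u) ≥ (C_{n,α,p} - μ) H(u) > 0` for every nonzero test function `u`, because
`μ < C_{n,α,p}` and `H(u)`, `G(u)` are finite (`FracHardy.energy_pos`). So `0` is a lower bound
which is never attained. The Hardy inequality is proved with the virtual ground state `|x|^{-β}`:
for `ρ = (|y|/|x|)^β < 1`, convexity of `t ↦ t^p` yields the Picone inequality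
`(1-ρ)^{p-1} |u(y)|^p ≤ |u(x)-u(y)|^p + (1-ρ)^{p-1} ρ^{1-p} |u(x)|^p` (`FracHardy.picone`).
It is multiplied by `|x-y|^{-n-σ}` and integrated over `δ|x| < |y| < θ|x|` with `0 < δ`, `θ < 1`.
Polar coordinates around the direction of one of the points (`FracHardy.lintegral_zonal`) reduce
the kernel integrals to one-dimensional integrals of `Φ_{n,α,p}`, and the difference of the two
resulting constants is half of the truncated Hardy constant (`FracHardy.wA_eq`). Since the regions
`|y| < |x|` and `|x| < |y|` contribute equally, letting `δ → 0` and `θ → 1` gives the inequality.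

*Small values.* Fix a test function `φ` supported in `1/2 ≤ |x| ≤ 2`. Rescaled to an annulus
`λ/2 ≤ |x-z| ≤ 2λ` it satisfies `G(φ((·-z)/λ)) = λ^{n-σ} G(φ)`, while
`∫ V |φ((·-z)/λ)|^p ≥ K (2λ)^{-σ} λ^n ∫ |φ|^p` as soon as `|x-z|^σ V ≥ K` on the annulus. Either
growth assumption makes `K` as large as desired for a suitable `λ` (with `z = 0` in the first one),
so after normalisation `G - μH ≤ G` becomes arbitrarily small (`FracHardy.exists_small`).
-/

open MeasureTheory Filter

namespace FracHardy

open scoped ENNReal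

/-! ### Polar coordinates -/


lemma sphereSurfaceArea_pos {m : ℕ} (hm : 1 ≤ m) : 0 < sphereSurfaceArea m := by
  have : (0 : ℝ) < m := by exact_mod_cast hm
  unfold sphereSurfaceArea
  have := Real.Gamma_pos_of_pos (half_pos this)
  positivity

lemma toSphere_univ {m : ℕ} (hm : 1 ≤ m) :
    (volume : Measure (EuclideanSpace ℝ (Fin m))).toSphere Set.univ =
      ENNReal.ofReal (sphereSurfaceArea m) := by
  have : Nonempty (Fin m) := ⟨⟨0, hm⟩⟩
  have hm' : (0 : ℝ) < m := by exact_mod_cast hm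
  have hG := Real.Gamma_pos_of_pos (half_pos hm')
  rw [Measure.toSphere_apply_univ, EuclideanSpace.volume_ball, finrank_euclideanSpace,
    Fintype.card_fin, ENNReal.ofReal_one, one_pow, one_mul, ← ENNReal.ofReal_natCast,
    ← ENNReal.ofReal_mul (Nat.cast_nonneg _)]
  congr 1
  unfold sphereSurfaceArea
  rw [Real.Gamma_add_one (by positivity), Real.sqrt_eq_rpow, ← Real.rpow_natCast,
    ← Real.rpow_mul Real.pi_pos.le, show (1 / 2 : ℝ) * m = m / 2 by ring]
  field_simp

/-- Integration of a radial function in polar coordinates. -/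
lemma lintegral_radial {m : ℕ} (hm : 1 ≤ m) {f : ℝ → ℝ≥0∞} (hf : Measurable f) :
    ∫⁻ w : EuclideanSpace ℝ (Fin m), f ‖w‖ =
      ENNReal.ofReal (sphereSurfaceArea m) *
        ∫⁻ r in Set.Ioi (0 : ℝ), ENNReal.ofReal (r ^ (m - 1)) * f r := by
  have : Nonempty (Fin m) := ⟨⟨0, hm⟩⟩
  set μ : Measure (EuclideanSpace ℝ (Fin m)) := volume
  have h1 : ∫⁻ x, f ‖x‖ ∂μ =
      ∫⁻ x : ({(0)}ᶜ : Set (EuclideanSpace ℝ (Fin m))), f (‖x.1‖) ∂(μ.comap (↑)) := by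
    rw [lintegral_subtype_comap (measurableSet_singleton _).compl fun x ↦ f (‖x‖),
      restrict_compl_singleton]
  have h2 := μ.measurePreserving_homeomorphUnitSphereProd.lintegral_comp_emb
        (Homeomorph.measurableEmbedding _) (f ∘ Subtype.val ∘ Prod.snd)
  simp only [Function.comp_def, homeomorphUnitSphereProd_apply_snd_coe] at h2
  have h3 := lintegral_prod (μ := μ.toSphere)
    (ν := Measure.volumeIoiPow (Module.finrank ℝ (EuclideanSpace ℝ (Fin m)) - 1))
    (fun z : _ × Set.Ioi (0 : ℝ) => f z.2)
    (hf.comp (measurable_subtype_coe.comp measurable_snd)).aemeasurable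
  rw [h1, h2, h3]
  dsimp only
  rw [lintegral_const, mul_comm, toSphere_univ hm, finrank_euclideanSpace, Fintype.card_fin,
    Measure.volumeIoiPow, lintegral_withDensity_eq_lintegral_mul _ (by fun_prop)
      (show Measurable (fun r : Set.Ioi (0 : ℝ) => f r) from hf.comp measurable_subtype_coe)]
  congr 1
  exact lintegral_subtype_comap measurableSet_Ioi
    fun r : ℝ => ENNReal.ofReal (r ^ (m - 1)) * f r

lemma exists_basis {m : ℕ} (e : EuclideanSpace ℝ (Fin (m + 1))) (he : ‖e‖ = 1) :
    ∃ b : OrthonormalBasis (Fin (m + 1)) ℝ (EuclideanSpace ℝ (Fin (m + 1))), b 0 = e := by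
  obtain ⟨b, hb⟩ := Orthonormal.exists_orthonormalBasis_extension_of_card_eq (𝕜 := ℝ)
    (E := EuclideanSpace ℝ (Fin (m + 1))) (ι := Fin (m + 1)) (by simp) (v := fun _ => e)
    (s := {0}) (by
      rw [orthonormal_iff_ite]
      rintro ⟨i, hi⟩ ⟨j, hj⟩
      simp only [Set.mem_singleton_iff] at hi hj
      subst hi; subst hj
      simp [he])
  exact ⟨b, hb 0 rfl⟩

/-- Splitting off the direction of a unit vector `e`: a function of `‖y‖` and `⟪e, y⟫` is
integrated over `ℝ × ℝ^m`. -/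
lemma lintegral_split {m : ℕ} (e : EuclideanSpace ℝ (Fin (m + 1))) (he : ‖e‖ = 1)
    {h : ℝ × ℝ → ℝ≥0∞} (hh : Measurable h) :
    ∫⁻ y : EuclideanSpace ℝ (Fin (m + 1)), h (‖y‖, inner ℝ e y) =
      ∫⁻ s : ℝ, ∫⁻ w : EuclideanSpace ℝ (Fin m), h (√(s ^ 2 + ‖w‖ ^ 2), s) := by
  obtain ⟨b, hb⟩ := exists_basis e he
  have h1 : ∫⁻ y : EuclideanSpace ℝ (Fin (m + 1)), h (‖y‖, inner ℝ e y) =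
      ∫⁻ y : EuclideanSpace ℝ (Fin (m + 1)), h (‖y‖, y 0) := by
    rw [← (b.repr.measurePreserving).lintegral_comp (f := fun y => h (‖y‖, y 0)) (by fun_prop)]
    simp [OrthonormalBasis.repr_apply_apply, hb]
  have h2 : ∫⁻ y : EuclideanSpace ℝ (Fin (m + 1)), h (‖y‖, y 0) =
      ∫⁻ v : Fin (m + 1) → ℝ, h (√(v 0 ^ 2 + ∑ i : Fin m, v i.succ ^ 2), v 0) := by
    rw [← (PiLp.volume_preserving_ofLp (Fin (m + 1))).lintegral_comp (by fun_prop)]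
    refine lintegral_congr fun y => ?_
    rw [EuclideanSpace.norm_eq, Fin.sum_univ_succ]
    simp
  have h3 : ∫⁻ v : Fin (m + 1) → ℝ, h (√(v 0 ^ 2 + ∑ i : Fin m, v i.succ ^ 2), v 0) =
      ∫⁻ q : ℝ × (Fin m → ℝ), h (√(q.1 ^ 2 + ∑ i : Fin m, q.2 i ^ 2), q.1) := by
    rw [← (volume_preserving_piFinSuccAbove (fun _ : Fin (m + 1) => ℝ) 0).lintegral_comp
      (by fun_prop)]
    refine lintegral_congr fun y => ?_
    simp [MeasurableEquiv.piFinSuccAbove, Fin.tail]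
  rw [h1, h2, h3, Measure.volume_eq_prod, lintegral_prod _ (by fun_prop)]
  refine lintegral_congr fun s => ?_
  rw [← (PiLp.volume_preserving_ofLp (Fin m)).lintegral_comp (by fun_prop)]
  refine lintegral_congr fun y => ?_
  rw [EuclideanSpace.norm_eq, Real.sq_sqrt (Finset.sum_nonneg fun _ _ => by positivity)]
  simp

/-- The substitution `t = cos θ`, which turns the angular integral of planar polar coordinates
into the one defining `Phi`. -/
lemma lintegral_cos_subst {k : ℝ} {m : ℕ} (hm : 1 ≤ m) (hk : k = ((m : ℝ) - 2) / 2)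
    (g : ℝ → ℝ≥0∞) :
    ∫⁻ t in Set.Ioo (-1 : ℝ) 1, ENNReal.ofReal ((1 - t ^ 2) ^ k) * g t =
      ∫⁻ θ in Set.Ioo 0 Real.pi, ENNReal.ofReal (Real.sin θ ^ (m - 1)) * g (Real.cos θ) := by
  have himg : Real.cos '' Set.Ioo 0 Real.pi = Set.Ioo (-1) 1 := by
    ext t
    constructor
    · rintro ⟨θ, hθ, rfl⟩
      have h1 := Real.strictAntiOn_cos (Set.left_mem_Icc.2 Real.pi_pos.le)
        (Set.Ioo_subset_Icc_self hθ) hθ.1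
      have h2 := Real.strictAntiOn_cos (Set.Ioo_subset_Icc_self hθ)
        (Set.right_mem_Icc.2 Real.pi_pos.le) hθ.2
      rw [Real.cos_zero] at h1
      rw [Real.cos_pi] at h2
      exact ⟨h2, h1⟩
    · intro ht
      refine ⟨Real.arccos t, ⟨Real.arccos_pos.2 ht.2, ?_⟩, Real.cos_arccos ht.1.le ht.2.le⟩
      exact lt_of_le_of_ne (Real.arccos_le_pi t) fun h => by
        rw [Real.arccos_eq_pi] at h; linarith [ht.1]
  rw [← himg, lintegral_image_eq_lintegral_abs_deriv_mul measurableSet_Ioo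
    (fun x _ => (Real.hasDerivAt_cos x).hasDerivWithinAt)
    (Real.injOn_cos.mono Set.Ioo_subset_Icc_self)]
  refine setLIntegral_congr_fun measurableSet_Ioo fun θ hθ => ?_
  have hs := Real.sin_pos_of_mem_Ioo hθ
  rw [← mul_assoc, ← ENNReal.ofReal_mul (abs_nonneg _)]
  congr 2
  rw [abs_neg, abs_of_pos hs, ← Real.sin_sq, ← Real.rpow_natCast, ← Real.rpow_natCast,
    ← Real.rpow_mul hs.le, Nat.cast_sub hm, hk]
  nth_rewrite 1 [← Real.rpow_one (Real.sin θ)]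
  rw [← Real.rpow_add hs]
  congr 1
  push_cast
  ring

/-- Polar coordinates adapted to a unit vector `e` in `ℝ^{m+1}`: with `r = ‖y‖` and
`⟪e, y⟫ = r t`, a zonal function is integrated in `(r, t)`. -/
lemma lintegral_zonal {m : ℕ} (hm : 1 ≤ m) (e : EuclideanSpace ℝ (Fin (m + 1))) (he : ‖e‖ = 1)
    {h : ℝ × ℝ → ℝ≥0∞} (hh : Measurable h) :
    ∫⁻ y : EuclideanSpace ℝ (Fin (m + 1)), h (‖y‖, inner ℝ e y) =
      ∫⁻ r in Set.Ioi (0 : ℝ), ENNReal.ofReal (r ^ m) *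
        (ENNReal.ofReal (sphereSurfaceArea m) *
          ∫⁻ t in Set.Ioo (-1 : ℝ) 1,
            ENNReal.ofReal ((1 - t ^ 2) ^ (((m : ℝ) - 2) / 2)) * h (r, r * t)) := by
  have hhr : ∀ s : ℝ, Measurable fun ρ : ℝ => h (√(s ^ 2 + ρ ^ 2), s) := fun s => by fun_prop
  rw [lintegral_split e he hh]
  simp_rw [fun s => lintegral_radial hm (hhr s)]
  let F : ℝ × ℝ → ℝ≥0∞ := fun q => (Set.Ioi (0 : ℝ)).indicator
    (fun ρ => ENNReal.ofReal (ρ ^ (m - 1)) * h (√(q.1 ^ 2 + ρ ^ 2), q.1)) q.2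
  have hF : Measurable F := by
    have : F = ({q : ℝ × ℝ | 0 < q.2}).indicator
        (fun q => ENNReal.ofReal (q.2 ^ (m - 1)) * h (√(q.1 ^ 2 + q.2 ^ 2), q.1)) := by
      ext q; simp [F, Set.indicator]
    rw [this]
    exact Measurable.indicator (by fun_prop) (measurableSet_lt measurable_const measurable_snd)
  have h1 : ∫⁻ s : ℝ, ENNReal.ofReal (sphereSurfaceArea m) *
      ∫⁻ r in Set.Ioi (0 : ℝ), ENNReal.ofReal (r ^ (m - 1)) * h (√(s ^ 2 + r ^ 2), s) =
      ENNReal.ofReal (sphereSurfaceArea m) * ∫⁻ q, F q := by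
    rw [Measure.volume_eq_prod, lintegral_prod _ hF.aemeasurable, ← lintegral_const_mul]
    · refine lintegral_congr fun s => ?_
      rw [← lintegral_indicator measurableSet_Ioi]
    · exact hF.lintegral_prod_right'
  rw [h1, ← lintegral_comp_polarCoord_symm, polarCoord_target, Measure.volume_eq_prod,
    ← Measure.prod_restrict, lintegral_prod]
  swap
  · refine Measurable.aemeasurable ?_
    simp only [smul_eq_mul, polarCoord_symm_apply]
    fun_prop
  have hinner : ∀ r ∈ Set.Ioi (0 : ℝ),
      ∫⁻ θ in Set.Ioo (-Real.pi) Real.pi, ENNReal.ofReal r • F (polarCoord.symm (r, θ)) =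
      ENNReal.ofReal (r ^ m) * ∫⁻ t in Set.Ioo (-1 : ℝ) 1,
            ENNReal.ofReal ((1 - t ^ 2) ^ (((m : ℝ) - 2) / 2)) * h (r, r * t) := by
    intro r hr
    have hr' : 0 < r := hr
    rw [lintegral_cos_subst hm rfl (fun t => h (r, r * t)), ← lintegral_const_mul _ (by fun_prop),
      ← lintegral_indicator measurableSet_Ioo, ← lintegral_indicator measurableSet_Ioo]
    refine lintegral_congr fun θ => ?_
    by_cases hθ : θ ∈ Set.Ioo 0 Real.pi
    · have hs := Real.sin_pos_of_mem_Ioo hθ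
      have hθ2 : θ ∈ Set.Ioo (-Real.pi) Real.pi := ⟨by linarith [hθ.1, Real.pi_pos], hθ.2⟩
      rw [Set.indicator_of_mem hθ, Set.indicator_of_mem hθ2]
      have hrs : r * Real.sin θ ∈ Set.Ioi (0 : ℝ) := mul_pos hr' hs
      simp only [polarCoord_symm_apply, F, smul_eq_mul]
      rw [Set.indicator_of_mem hrs, ← mul_assoc, ← mul_assoc, ← ENNReal.ofReal_mul hr'.le,
        ← ENNReal.ofReal_mul (by positivity)]
      congr 2
      · obtain ⟨k, rfl⟩ : ∃ k, m = k + 1 := ⟨m - 1, by omega⟩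
        simp only [Nat.add_sub_cancel]
        ring
      · congr 1
        rw [show (r * Real.cos θ) ^ 2 + (r * Real.sin θ) ^ 2 = r ^ 2 by
          rw [mul_pow, mul_pow, ← mul_add, Real.cos_sq_add_sin_sq, mul_one], Real.sqrt_sq hr'.le]
    · rw [Set.indicator_of_notMem hθ]
      by_cases hθ2 : θ ∈ Set.Ioo (-Real.pi) Real.pi
      · rw [Set.indicator_of_mem hθ2]
        have hs : Real.sin θ ≤ 0 := Real.sin_nonpos_of_nonpos_of_neg_pi_le
          (by by_contra! hc; exact hθ ⟨hc, hθ2.2⟩) hθ2.1.le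
        have hrs : r * Real.sin θ ∉ Set.Ioi (0 : ℝ) := by
          simp only [Set.mem_Ioi, not_lt]
          exact mul_nonpos_of_nonneg_of_nonpos hr'.le hs
        simp only [polarCoord_symm_apply, F, smul_eq_mul]
        rw [Set.indicator_of_notMem hrs, mul_zero]
      · rw [Set.indicator_of_notMem hθ2]
  rw [← lintegral_const_mul]
  swap
  · refine Measurable.lintegral_prod_right' (f := fun z : ℝ × ℝ => 
      ENNReal.ofReal z.1 • F (polarCoord.symm z)) ?_
    simp only [smul_eq_mul, polarCoord_symm_apply]
    fun_prop
  refine setLIntegral_congr_fun measurableSet_Ioi fun r hr => ?_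
  dsimp only
  rw [hinner r hr]
  ring

/-! ### Kernel integrals and the Picone inequality -/

/-- The `ℝ≥0∞`-valued version of `Φ_{m+1,α,p}(r)` with `κ = m + 1 + pα`; lower Lebesgue integrals
spare the integrability discussion of the Bochner integral in `Phi`. -/
noncomputable def PhiE (m : ℕ) (κ r : ℝ) : ℝ≥0∞ :=
  ENNReal.ofReal (sphereSurfaceArea m) *
    ∫⁻ t in Set.Ioo (-1 : ℝ) 1,
      ENNReal.ofReal ((1 - t ^ 2) ^ (((m : ℝ) - 2) / 2)) *
        ENNReal.ofReal ((1 - 2 * r * t + r ^ 2) ^ (-κ / 2))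

lemma measurable_PhiE (m : ℕ) (κ : ℝ) : Measurable (PhiE m κ) := by
  unfold PhiE
  refine Measurable.const_mul ?_ _
  refine Measurable.lintegral_prod_right' (f := fun z : ℝ × ℝ =>
    ENNReal.ofReal ((1 - z.2 ^ 2) ^ (((m : ℝ) - 2) / 2)) *
        ENNReal.ofReal ((1 - 2 * z.1 * z.2 + z.1 ^ 2) ^ (-κ / 2))) ?_
  fun_prop

/-- The symmetry of the angular integral under `r ↦ 1/r`. -/
lemma PhiE_inv (m : ℕ) (κ : ℝ) {r : ℝ} (hr : 0 < r) :
    PhiE m κ r⁻¹ = ENNReal.ofReal (r ^ κ) * PhiE m κ r := by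
  unfold PhiE
  rw [mul_left_comm (ENNReal.ofReal (r ^ κ)),
    ← lintegral_const_mul (ENNReal.ofReal (r ^ κ)) (by fun_prop)]
  congr 1
  refine setLIntegral_congr_fun measurableSet_Ioo fun t ht => ?_
  rw [mul_left_comm (ENNReal.ofReal (r ^ κ)),
    ← ENNReal.ofReal_mul (p := r ^ κ) (by positivity)]
  congr 2
  have h0 : 0 ≤ 1 - 2 * r * t + r ^ 2 := by
    nlinarith [sq_nonneg (r - t), ht.1, ht.2]
  rw [show 1 - 2 * r⁻¹ * t + r⁻¹ ^ 2 = (r ^ 2)⁻¹ * (1 - 2 * r * t + r ^ 2) by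
      field_simp; ring,
    Real.mul_rpow (by positivity) h0, Real.inv_rpow (by positivity), ← Real.rpow_natCast r,
    ← Real.rpow_mul hr.le, ← Real.rpow_neg hr.le]
  congr 2
  push_cast
  ring

lemma lintegral_smul_subst {m : ℕ} {R : ℝ} (hR : 0 < R)
    {f : EuclideanSpace ℝ (Fin (m + 1)) → ℝ≥0∞} (hf : Measurable f) :
    ∫⁻ y, f y = ENNReal.ofReal (R ^ (m + 1)) * ∫⁻ y, f (R • y) := by
  have h := lintegral_map (μ := (volume : Measure (EuclideanSpace ℝ (Fin (m + 1))))) hf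
    (measurable_const_smul R)
  rw [Measure.map_addHaar_smul _ hR.ne', lintegral_smul_measure, finrank_euclideanSpace,
    Fintype.card_fin] at h
  rw [← h, smul_eq_mul, ← mul_assoc, ← ENNReal.ofReal_mul (by positivity),
    abs_of_pos (by positivity), mul_inv_cancel₀ (by positivity), ENNReal.ofReal_one, one_mul]

/-- The kernel `‖x - y‖^{-κ}` integrated in `y` against a weight depending on `‖y‖ / ‖x‖`. -/
lemma lintegral_kernel {m : ℕ} (hm : 1 ≤ m) (κ : ℝ) {w : ℝ → ℝ≥0∞} (hw : Measurable w)
    {x : EuclideanSpace ℝ (Fin (m + 1))} (hx : x ≠ 0) :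
    ∫⁻ y, w (‖y‖ / ‖x‖) * ENNReal.ofReal (‖x - y‖ ^ (-κ)) =
      ENNReal.ofReal (‖x‖ ^ ((m : ℝ) + 1 - κ)) *
        ∫⁻ r in Set.Ioi (0 : ℝ), w r * (ENNReal.ofReal (r ^ m) * PhiE m κ r) := by
  have hx0 : 0 < ‖x‖ := norm_pos_iff.2 hx
  set e := ‖x‖⁻¹ • x with he_def
  have he : ‖e‖ = 1 := norm_smul_inv_norm hx
  have hxe : x = ‖x‖ • e := by rw [he_def, smul_inv_smul₀ hx0.ne']
  rw [lintegral_smul_subst hx0 (by fun_prop)]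
  have h1 : ∀ y : EuclideanSpace ℝ (Fin (m + 1)),
      w (‖‖x‖ • y‖ / ‖x‖) * ENNReal.ofReal (‖x - ‖x‖ • y‖ ^ (-κ)) =
      ENNReal.ofReal (‖x‖ ^ (-κ)) *
        (w ‖y‖ * ENNReal.ofReal ((1 - 2 * inner ℝ e y + ‖y‖ ^ 2) ^ (-κ / 2))) := by
    intro y
    have h2 : ‖x - ‖x‖ • y‖ = ‖x‖ * ‖e - y‖ := by
      nth_rewrite 1 [hxe]
      rw [← smul_sub, norm_smul, norm_norm]
    have h3 : 1 - 2 * inner ℝ e y + ‖y‖ ^ 2 = ‖e - y‖ ^ 2 := by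
      rw [norm_sub_sq_real, he]; ring
    rw [h2, h3, norm_smul, norm_norm, mul_div_cancel_left₀ _ hx0.ne',
      Real.mul_rpow hx0.le (norm_nonneg _), ENNReal.ofReal_mul (by positivity), ← Real.rpow_natCast,
      ← Real.rpow_mul (norm_nonneg _)]
    rw [show ((2 : ℕ) : ℝ) * (-κ / 2) = -κ by push_cast; ring]
    ring
  simp_rw [h1]
  rw [lintegral_const_mul _ (by fun_prop),
    lintegral_zonal hm e he
      (h := fun q => w q.1 * ENNReal.ofReal ((1 - 2 * q.2 + q.1 ^ 2) ^ (-κ / 2))) (by fun_prop),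
    ← mul_assoc, ← ENNReal.ofReal_mul (by positivity), ← Real.rpow_natCast ‖x‖,
    ← Real.rpow_add hx0]
  congr 2
  · congr 2
    push_cast
    ring
  · ext r
    have h4 : ∀ t : ℝ, ENNReal.ofReal ((1 - t ^ 2) ^ (((m : ℝ) - 2) / 2)) *
        (w r * ENNReal.ofReal ((1 - 2 * (r * t) + r ^ 2) ^ (-κ / 2))) =
        w r * (ENNReal.ofReal ((1 - t ^ 2) ^ (((m : ℝ) - 2) / 2)) *
        ENNReal.ofReal ((1 - 2 * r * t + r ^ 2) ^ (-κ / 2))) := fun t => by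
      rw [← mul_assoc 2 r t]; ring
    simp_rw [h4]
    rw [lintegral_const_mul _ (by fun_prop)]
    unfold PhiE
    ring

/-- The same kernel with the roles of numerator and denominator exchanged; the radial variable is
inverted. -/
lemma lintegral_kernel_inv {m : ℕ} (hm : 1 ≤ m) (κ : ℝ) {w : ℝ → ℝ≥0∞} (hw : Measurable w)
    {y : EuclideanSpace ℝ (Fin (m + 1))} (hy : y ≠ 0) :
    ∫⁻ x, w (‖y‖ / ‖x‖) * ENNReal.ofReal (‖x - y‖ ^ (-κ)) =
      ENNReal.ofReal (‖y‖ ^ ((m : ℝ) + 1 - κ)) *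
        ∫⁻ r in Set.Ioi (0 : ℝ),
          w r * (ENNReal.ofReal (r ^ (κ - (m : ℝ) - 2)) * PhiE m κ r) := by
  have h := lintegral_kernel hm κ (w := fun s => w s⁻¹) (by fun_prop) hy
  simp only [inv_div] at h
  simp_rw [norm_sub_rev y] at h
  rw [h]
  congr 1
  have himg : (fun r : ℝ => r⁻¹) '' Set.Ioi (0 : ℝ) = Set.Ioi 0 := by
    ext r
    constructor
    · rintro ⟨s, hs, rfl⟩
      exact inv_pos.2 (Set.mem_Ioi.1 hs)
    · intro hr
      exact ⟨r⁻¹, inv_pos.2 (Set.mem_Ioi.1 hr), inv_inv r⟩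
  nth_rewrite 1 [← himg]
  rw [lintegral_image_eq_lintegral_abs_deriv_mul measurableSet_Ioi
    (fun x hx => (hasDerivAt_inv (ne_of_gt hx)).hasDerivWithinAt) inv_injective.injOn]
  refine setLIntegral_congr_fun measurableSet_Ioi fun r hr => ?_
  have hr0 : 0 < r := hr
  rw [inv_inv, PhiE_inv m κ hr0, abs_neg, abs_of_pos (by positivity)]
  rw [show ENNReal.ofReal (r ^ 2)⁻¹ * (w r * (ENNReal.ofReal (r⁻¹ ^ m) *
      (ENNReal.ofReal (r ^ κ) * PhiE m κ r))) =
      w r * ((ENNReal.ofReal (r ^ 2)⁻¹ * ENNReal.ofReal (r⁻¹ ^ m) * ENNReal.ofReal (r ^ κ)) *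
        PhiE m κ r) by ring, ← ENNReal.ofReal_mul (by positivity),
      ← ENNReal.ofReal_mul (by positivity)]
  congr 3
  rw [inv_pow, ← Real.rpow_natCast, ← Real.rpow_natCast, ← Real.rpow_neg hr0.le,
    ← Real.rpow_neg hr0.le, ← Real.rpow_add hr0, ← Real.rpow_add hr0]
  congr 1
  push_cast
  ring

/-- A Picone-type inequality: `ρ` is the quotient of the values of the virtual ground state
`|·|^{-(n-pα)/p}` at the two points. -/
lemma picone {p : ℝ} (hp : 1 ≤ p) {ρ : ℝ} (h0 : 0 < ρ) (h1 : ρ < 1) (a b : ℝ) :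
    (1 - ρ) ^ (p - 1) * |b| ^ p ≤
      |a - b| ^ p + (1 - ρ) ^ (p - 1) * ρ ^ (1 - p) * |a| ^ p := by
  have h1' : 0 < 1 - ρ := by linarith
  have hc := (convexOn_rpow hp).2 (show |a| / ρ ∈ Set.Ici (0 : ℝ) from by
      simp only [Set.mem_Ici]; positivity)
    (show |a - b| / (1 - ρ) ∈ Set.Ici (0 : ℝ) from by
      simp only [Set.mem_Ici]; positivity) h0.le h1'.le (by ring)
  simp only [smul_eq_mul] at hc
  rw [mul_div_cancel₀ _ h0.ne', mul_div_cancel₀ _ h1'.ne', Real.div_rpow (abs_nonneg _) h0.le,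
    Real.div_rpow (abs_nonneg _) h1'.le] at hc
  have hb : |b| ^ p ≤ (|a| + |a - b|) ^ p := by
    refine Real.rpow_le_rpow (abs_nonneg _) ?_ (by linarith)
    have := abs_sub_abs_le_abs_sub b a
    rw [abs_sub_comm] at this
    linarith
  have hb2 := hb.trans hc
  have e1 : ρ ^ (1 - p) = ρ / ρ ^ p := by rw [Real.rpow_sub h0, Real.rpow_one]
  have e2 : (1 - ρ) ^ (p - 1) = (1 - ρ) ^ p / (1 - ρ) := by rw [Real.rpow_sub h1', Real.rpow_one]
  have h3 := mul_le_mul_of_nonneg_left hb2 (show 0 ≤ (1 - ρ) ^ (p - 1) by positivity)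
  refine h3.trans (le_of_eq ?_)
  rw [e1, e2]
  have := Real.rpow_pos_of_pos h1' p
  have := Real.rpow_pos_of_pos h0 p
  field_simp
  ring

/-! ### The sharp fractional Hardy inequality -/

/-- The weight `(1 - r^β)^{p-1}` truncated to `δ < r < θ`. -/
noncomputable def wA (p β δ θ : ℝ) : ℝ → ℝ≥0∞ :=
  (Set.Ioo δ θ).indicator fun r => ENNReal.ofReal ((1 - r ^ β) ^ (p - 1))

/-- The weight `(1 - r^β)^{p-1} r^{β(1-p)}` truncated to `δ < r < θ`. -/
noncomputable def wB (p β δ θ : ℝ) : ℝ → ℝ≥0∞ :=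
  (Set.Ioo δ θ).indicator fun r => ENNReal.ofReal ((1 - r ^ β) ^ (p - 1) * (r ^ β) ^ (1 - p))

/-- The integral defining the Hardy constant, without its factor `2` and truncated to
`δ < r < θ`; here `σ = pα`. -/
noncomputable def cTrunc (m : ℕ) (p σ β δ θ : ℝ) : ℝ≥0∞ :=
  ∫⁻ r in Set.Ioo δ θ,
    ENNReal.ofReal (r ^ (σ - 1) * |1 - r ^ β| ^ p) * PhiE m ((m : ℝ) + 1 + σ) r

/-- The Gagliardo energy as a lower Lebesgue integral; here `σ = pα`. -/
noncomputable def gagE (m : ℕ) (p σ : ℝ) (u : EuclideanSpace ℝ (Fin (m + 1)) → ℝ) : ℝ≥0∞ :=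
  ∫⁻ x, ∫⁻ y, ENNReal.ofReal (|u x - u y| ^ p * ‖x - y‖ ^ (-((m : ℝ) + 1 + σ)))

/-- The Hardy term as a lower Lebesgue integral; here `σ = pα`. -/
noncomputable def harE (m : ℕ) (p σ : ℝ) (u : EuclideanSpace ℝ (Fin (m + 1)) → ℝ) : ℝ≥0∞ :=
  ∫⁻ x, ENNReal.ofReal (|u x| ^ p * ‖x‖ ^ (-σ))

lemma measurable_wA (p β δ θ : ℝ) : Measurable (wA p β δ θ) := by
  unfold wA
  exact Measurable.indicator (by fun_prop) measurableSet_Ioo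

lemma measurable_wB (p β δ θ : ℝ) : Measurable (wB p β δ θ) := by
  unfold wB
  exact Measurable.indicator (by fun_prop) measurableSet_Ioo

lemma wB_integral_lt_top {m : ℕ} (hm : 1 ≤ m) {p σ β δ θ : ℝ} (hp : 1 ≤ p) (hσ : 0 < σ)
    (hβ : 0 < β) (hδ : 0 < δ) (hθ : θ < 1) :
    ∫⁻ r in Set.Ioi (0 : ℝ), wB p β δ θ r *
      (ENNReal.ofReal (r ^ m) * PhiE m ((m : ℝ) + 1 + σ) r) < ∞ := by
  obtain ⟨e, he⟩ := exists_norm_eq (EuclideanSpace ℝ (Fin (m + 1))) zero_le_one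
  have he0 : e ≠ 0 := by rintro rfl; simp at he
  have h := lintegral_kernel hm ((m : ℝ) + 1 + σ) (measurable_wB p β δ θ) he0
  rw [he, Real.one_rpow, ENNReal.ofReal_one, one_mul] at h
  rw [← h]
  set C := ENNReal.ofReal ((δ ^ β) ^ (1 - p)) *
    ENNReal.ofReal ((1 - θ) ^ (-((m : ℝ) + 1 + σ)))
  calc ∫⁻ y, wB p β δ θ (‖y‖ / 1) * ENNReal.ofReal (‖e - y‖ ^ (-((m : ℝ) + 1 + σ)))
      ≤ ∫⁻ y, (Metric.ball (0 : EuclideanSpace ℝ (Fin (m + 1))) 1).indicator (fun _ => C) y := by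
        refine lintegral_mono fun y => ?_
        rw [div_one]
        by_cases hy : ‖y‖ ∈ Set.Ioo δ θ
        · have hy1 : y ∈ Metric.ball (0 : EuclideanSpace ℝ (Fin (m + 1))) 1 := by
            rw [mem_ball_zero_iff]; linarith [hy.2]
          have hr : 0 < ‖y‖ := hδ.trans hy.1
          rw [Set.indicator_of_mem hy1, wB, Set.indicator_of_mem hy]
          have hle : ‖y‖ ^ β ≤ 1 := Real.rpow_le_one hr.le (by linarith [hy.2]) hβ.le
          have hpos : 0 < ‖y‖ ^ β := by positivity
          refine mul_le_mul' (ENNReal.ofReal_le_ofReal ?_) (ENNReal.ofReal_le_ofReal ?_)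
          · calc (1 - ‖y‖ ^ β) ^ (p - 1) * (‖y‖ ^ β) ^ (1 - p)
                ≤ 1 * (δ ^ β) ^ (1 - p) := by
                  refine mul_le_mul (Real.rpow_le_one (by linarith) (by linarith) (by linarith))
                    (Real.rpow_le_rpow_of_nonpos (by positivity)
                      (Real.rpow_le_rpow hδ.le hy.1.le hβ.le) (by linarith))
                    (by positivity) zero_le_one
              _ = _ := one_mul _
          · refine Real.rpow_le_rpow_of_nonpos (by linarith) ?_ (by
              have : (0 : ℝ) ≤ m := Nat.cast_nonneg m
              linarith)
            have := norm_sub_norm_le e y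
            linarith [hy.2]
        · rw [wB, Set.indicator_of_notMem hy, zero_mul]
          exact zero_le
    _ = C * volume (Metric.ball (0 : EuclideanSpace ℝ (Fin (m + 1))) 1) := by
        rw [lintegral_indicator measurableSet_ball, setLIntegral_const]
    _ < ∞ := ENNReal.mul_lt_top (ENNReal.mul_lt_top ENNReal.ofReal_lt_top ENNReal.ofReal_lt_top)
        measure_ball_lt_top

/-- The two one-dimensional integrals coming from the Picone inequality differ exactly by the
truncated Hardy constant; this is where `pβ = n - pα` enters. -/
lemma wA_eq {m : ℕ} {p σ β δ θ : ℝ}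
    (hβ : 0 < β) (hβp : β * p = (m : ℝ) + 1 - σ) (hδ : 0 < δ) (hθ : θ < 1) :
    ∫⁻ r in Set.Ioi (0 : ℝ), wA p β δ θ r *
      (ENNReal.ofReal (r ^ ((m : ℝ) + 1 + σ - (m : ℝ) - 2)) * PhiE m ((m : ℝ) + 1 + σ) r) =
    cTrunc m p σ β δ θ + ∫⁻ r in Set.Ioi (0 : ℝ), wB p β δ θ r *
      (ENNReal.ofReal (r ^ m) * PhiE m ((m : ℝ) + 1 + σ) r) := by
  have hP := measurable_PhiE m ((m : ℝ) + 1 + σ)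
  have hc : cTrunc m p σ β δ θ = ∫⁻ r in Set.Ioi (0 : ℝ), (Set.Ioo δ θ).indicator (fun r =>
      ENNReal.ofReal (r ^ (σ - 1) * |1 - r ^ β| ^ p) * PhiE m ((m : ℝ) + 1 + σ) r) r := by
    rw [setLIntegral_indicator measurableSet_Ioo, cTrunc, Set.inter_eq_left.2]
    exact fun r hr => hδ.trans hr.1
  rw [hc, ← lintegral_add_left (Measurable.indicator (by fun_prop) measurableSet_Ioo)]
  refine setLIntegral_congr_fun measurableSet_Ioi fun r hr => ?_
  have hr0 : 0 < r := hr
  by_cases h : r ∈ Set.Ioo δ θ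
  · simp only [wA, wB, Set.indicator_of_mem h]
    have hle : r ^ β < 1 := Real.rpow_lt_one hr0.le (by linarith [h.2]) hβ
    have h1 : 0 < 1 - r ^ β := by linarith
    rw [← mul_assoc, ← mul_assoc, ← ENNReal.ofReal_mul (by positivity),
      ← ENNReal.ofReal_mul (by positivity), ← add_mul,
      ← ENNReal.ofReal_add (by positivity) (by positivity)]
    congr 2
    rw [abs_of_pos h1]
    have e1 : (1 - r ^ β) ^ p = (1 - r ^ β) ^ (p - 1) * (1 - r ^ β) := by
      nth_rewrite 3 [← Real.rpow_one (1 - r ^ β)]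
      rw [← Real.rpow_add h1]; congr 1; ring
    have e2 : (r ^ β) ^ (1 - p) * r ^ m = r ^ (σ - 1) * r ^ β := by
      rw [← Real.rpow_natCast, ← Real.rpow_mul hr0.le, ← Real.rpow_add hr0, ← Real.rpow_add hr0]
      congr 1
      linear_combination -hβp
    rw [e1, mul_assoc ((1 - r ^ β) ^ (p - 1)) _ (r ^ m), e2,
      show (m : ℝ) + 1 + σ - (m : ℝ) - 2 = σ - 1 by ring]
    ring
  · simp [wA, wB, Set.indicator_of_notMem h]

lemma ae_ne_zero (m : ℕ) : ∀ᵐ x : EuclideanSpace ℝ (Fin (m + 1)), x ≠ 0 := by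
  have : volume ({0} : Set (EuclideanSpace ℝ (Fin (m + 1)))) = 0 := measure_singleton 0
  exact measure_eq_zero_iff_ae_notMem.1 this

/-- The Picone inequality, multiplied by the kernel and truncated to `δ < ‖y‖ / ‖x‖ < θ`. -/
lemma picone_kernel {m : ℕ} {p β δ θ κ : ℝ} (hp : 1 ≤ p) (hβ : 0 < β) (hδ : 0 < δ) (hθ : θ < 1)
    (u : EuclideanSpace ℝ (Fin (m + 1)) → ℝ) (x y : EuclideanSpace ℝ (Fin (m + 1))) :
    wA p β δ θ (‖y‖ / ‖x‖) * ENNReal.ofReal (‖x - y‖ ^ (-κ)) * ENNReal.ofReal (|u y| ^ p) ≤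
      (Set.Ioo δ θ).indicator 1 (‖y‖ / ‖x‖) *
        ENNReal.ofReal (|u x - u y| ^ p * ‖x - y‖ ^ (-κ)) +
      wB p β δ θ (‖y‖ / ‖x‖) * ENNReal.ofReal (‖x - y‖ ^ (-κ)) * ENNReal.ofReal (|u x| ^ p) := by
  by_cases h : ‖y‖ / ‖x‖ ∈ Set.Ioo δ θ
  · simp only [wA, wB, Set.indicator_of_mem h, Pi.one_apply, one_mul]
    set r := ‖y‖ / ‖x‖
    have hr0 : 0 < r := hδ.trans h.1
    have hle : r ^ β < 1 := Real.rpow_lt_one hr0.le (by linarith [h.2]) hβ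
    have h1 : 0 < 1 - r ^ β := by linarith
    rw [← ENNReal.ofReal_mul (by positivity), ← ENNReal.ofReal_mul (by positivity),
      ← ENNReal.ofReal_mul (by positivity), ← ENNReal.ofReal_mul (by positivity),
      ← ENNReal.ofReal_add (by positivity) (by positivity)]
    refine ENNReal.ofReal_le_ofReal ?_
    have := mul_le_mul_of_nonneg_right (picone hp (by positivity) hle (u x) (u y))
      (show 0 ≤ ‖x - y‖ ^ (-κ) by positivity)
    linarith
  · simp [wA, wB, Set.indicator_of_notMem h]

/-- For a symmetric kernel, the disjoint regions `δ < ‖y‖ / ‖x‖ < θ` and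
`δ < ‖x‖ / ‖y‖ < θ` contribute equally. -/
lemma two_mul_cone_le {E : Type*} [NormedAddCommGroup E] [MeasurableSpace E] [BorelSpace E]
    [SecondCountableTopology E] (ν : Measure E) [SFinite ν] {δ θ : ℝ} (hδ : 0 < δ) (hθ : θ < 1)
    {D : E → E → ℝ≥0∞} (hD : Measurable fun z : E × E => D z.1 z.2)
    (hs : ∀ x y, D x y = D y x) :
    2 * ∫⁻ x, ∫⁻ y, (Set.Ioo δ θ).indicator 1 (‖y‖ / ‖x‖) * D x y ∂ν ∂ν ≤
      ∫⁻ x, ∫⁻ y, D x y ∂ν ∂ν := by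
  have hT : Measurable ((Set.Ioo δ θ).indicator (1 : ℝ → ℝ≥0∞)) :=
    measurable_one.indicator measurableSet_Ioo
  generalize hTd : (Set.Ioo δ θ).indicator (1 : ℝ → ℝ≥0∞) = T at hT ⊢
  have hTDm : Measurable (fun z : E × E => T (‖z.2‖ / ‖z.1‖) * D z.1 z.2) :=
    (hT.comp (by fun_prop)).mul hD
  have hTx : ∀ x : E, Measurable fun y : E => T (‖y‖ / ‖x‖) * D x y := fun x =>
    hTDm.comp measurable_prodMk_left
  have hG₂ : ∫⁻ x, ∫⁻ y, T (‖y‖ / ‖x‖) * D x y ∂ν ∂ν =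
      ∫⁻ x, ∫⁻ y, T (‖x‖ / ‖y‖) * D x y ∂ν ∂ν := by
    rw [lintegral_lintegral_swap hTDm.aemeasurable]
    exact lintegral_congr fun y => lintegral_congr fun x => by rw [hs x y]
  rw [two_mul]
  nth_rewrite 2 [hG₂]
  rw [← lintegral_add_left hTDm.lintegral_prod_right']
  refine lintegral_mono fun x => ?_
  dsimp only
  rw [← lintegral_add_left (hTx x)]
  refine lintegral_mono fun y => ?_
  change T (‖y‖ / ‖x‖) * D x y + T (‖x‖ / ‖y‖) * D x y ≤ D x y
  rw [← add_mul]
  refine mul_le_of_le_one_left' ?_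
  subst hTd
  by_cases h : ‖y‖ / ‖x‖ ∈ Set.Ioo δ θ
  · have h' : ‖x‖ / ‖y‖ ∉ Set.Ioo δ θ := by
      intro h'
      have h3 : ‖x‖ / ‖y‖ = (‖y‖ / ‖x‖)⁻¹ := (inv_div _ _).symm
      have h4 : 1 < ‖x‖ / ‖y‖ := by
        rw [h3]
        exact (one_lt_inv₀ (hδ.trans h.1)).2 (h.2.trans hθ)
      linarith [h'.2]
    simp [h, h']
  · simp only [Set.indicator_of_notMem h, zero_add]
    exact Set.indicator_le_self _ _ _

/-- The sharp fractional Hardy inequality with the constant truncated away from `r = 0, 1`.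
The Picone inequality is integrated over `δ‖x‖ < ‖y‖ < θ‖x‖`; the truncation makes the term to be
cancelled finite. -/
lemma hardy_trunc {m : ℕ} (hm : 1 ≤ m) {p σ β δ θ : ℝ} (hp : 1 ≤ p) (hσ : 0 < σ)
    (hβ : 0 < β) (hβp : β * p = (m : ℝ) + 1 - σ) (hδ : 0 < δ) (hθ : θ < 1)
    {u : EuclideanSpace ℝ (Fin (m + 1)) → ℝ} (hu : Measurable u) (hH : harE m p σ u < ∞) :
    2 * cTrunc m p σ β δ θ * harE m p σ u ≤ gagE m p σ u := by
  have hab := wA_eq (m := m) (σ := σ) hβ hβp hδ hθ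
  have hbt := wB_integral_lt_top (p := p) (δ := δ) hm hp hσ hβ hδ hθ
  have hL : ∫⁻ x : EuclideanSpace ℝ (Fin (m + 1)), ∫⁻ y : EuclideanSpace ℝ (Fin (m + 1)),
      wA p β δ θ (‖y‖ / ‖x‖) * ENNReal.ofReal (‖x - y‖ ^ (-((m : ℝ) + 1 + σ))) *
      ENNReal.ofReal (|u y| ^ p) = (∫⁻ r in Set.Ioi (0 : ℝ), wA p β δ θ r *
      (ENNReal.ofReal (r ^ ((m : ℝ) + 1 + σ - (m : ℝ) - 2)) * PhiE m ((m : ℝ) + 1 + σ) r)) *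
      harE m p σ u := by
    have hmA := measurable_wA p β δ θ
    rw [lintegral_lintegral_swap (by fun_prop), harE, ← lintegral_const_mul _ (by fun_prop)]
    refine lintegral_congr_ae ?_
    filter_upwards [ae_ne_zero m] with y hy
    rw [lintegral_mul_const _ (by fun_prop), lintegral_kernel_inv hm _ hmA hy,
      ENNReal.ofReal_mul (by positivity), show (m : ℝ) + 1 - (m + 1 + σ) = -σ by ring]
    ring
  have hR : ∫⁻ x : EuclideanSpace ℝ (Fin (m + 1)), ∫⁻ y : EuclideanSpace ℝ (Fin (m + 1)),
      wB p β δ θ (‖y‖ / ‖x‖) * ENNReal.ofReal (‖x - y‖ ^ (-((m : ℝ) + 1 + σ))) *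
      ENNReal.ofReal (|u x| ^ p) = (∫⁻ r in Set.Ioi (0 : ℝ), wB p β δ θ r *
      (ENNReal.ofReal (r ^ m) * PhiE m ((m : ℝ) + 1 + σ) r)) * harE m p σ u := by
    have hmB := measurable_wB p β δ θ
    rw [harE, ← lintegral_const_mul _ (by fun_prop)]
    refine lintegral_congr_ae ?_
    filter_upwards [ae_ne_zero m] with x hx
    rw [lintegral_mul_const _ (by fun_prop), lintegral_kernel hm _ hmB hx,
      ENNReal.ofReal_mul (by positivity), show (m : ℝ) + 1 - (m + 1 + σ) = -σ by ring]
    ring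
  have hDm : Measurable fun z : EuclideanSpace ℝ (Fin (m + 1)) × EuclideanSpace ℝ (Fin (m + 1)) =>
      ENNReal.ofReal (|u z.1 - u z.2| ^ p * ‖z.1 - z.2‖ ^ (-((m : ℝ) + 1 + σ))) := by fun_prop
  have htwo := two_mul_cone_le volume hδ hθ (D := fun x y : EuclideanSpace ℝ (Fin (m + 1)) =>
      ENNReal.ofReal (|u x - u y| ^ p * ‖x - y‖ ^ (-((m : ℝ) + 1 + σ)))) hDm
    (fun x y => by rw [abs_sub_comm, norm_sub_rev])
  have hTDm : Measurable fun z : EuclideanSpace ℝ (Fin (m + 1)) ×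
      EuclideanSpace ℝ (Fin (m + 1)) => (Set.Ioo δ θ).indicator 1 (‖z.2‖ / ‖z.1‖) *
      ENNReal.ofReal (|u z.1 - u z.2| ^ p * ‖z.1 - z.2‖ ^ (-((m : ℝ) + 1 + σ))) :=
    ((measurable_one.indicator measurableSet_Ioo).comp (by fun_prop)).mul hDm
  have hmain := lintegral_mono (μ := volume) fun x => lintegral_mono (μ := volume) fun y =>
    picone_kernel (κ := (m : ℝ) + 1 + σ) hp hβ hδ hθ u x y
  have hadd := lintegral_congr (μ := volume) fun x : EuclideanSpace ℝ (Fin (m + 1)) =>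
    lintegral_add_left (μ := volume) (hTDm.comp (measurable_prodMk_left (x := x)))
      (fun y => wB p β δ θ (‖y‖ / ‖x‖) * ENNReal.ofReal (‖x - y‖ ^ (-((m : ℝ) + 1 + σ))) *
        ENNReal.ofReal (|u x| ^ p))
  have hmain2 := (hmain.trans_eq hadd).trans_eq
    (lintegral_add_left hTDm.lintegral_prod_right' _)
  have h3 := hL.symm.trans_le (hmain2.trans_eq (congrArg _ hR))
  rw [hab, add_mul] at h3
  have hc := (ENNReal.add_le_add_iff_right (ENNReal.mul_lt_top hbt hH).ne).1 h3
  rw [mul_assoc]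
  exact (mul_le_mul_right hc 2).trans htwo

lemma ofReal_integral_le {X : Type*} [MeasurableSpace X] (μ : Measure X) (f : X → ℝ) :
    ENNReal.ofReal (∫ x, f x ∂μ) ≤ ∫⁻ x, ENNReal.ofReal (f x) ∂μ := by
  by_cases hf : Integrable f μ
  · rw [integral_eq_lintegral_pos_part_sub_lintegral_neg_part hf]
    refine (ENNReal.ofReal_le_ofReal (sub_le_self _ ENNReal.toReal_nonneg)).trans ?_
    exact ENNReal.ofReal_toReal_le
  · rw [integral_undef hf, ENNReal.ofReal_zero]
    exact zero_le

/-- Only `≤` holds in general, since a divergent Bochner integral has the value `0`; this is the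
direction needed to bound `hardyConst` from above. -/
lemma Phi_le {m : ℕ} (hm : 1 ≤ m) (α p r : ℝ) :
    ENNReal.ofReal (Phi (m + 1) α p r) ≤ PhiE m ((m : ℝ) + 1 + p * α) r := by
  unfold Phi PhiE
  rw [Nat.add_sub_cancel, ENNReal.ofReal_mul (sphereSurfaceArea_pos hm).le,
    intervalIntegral.integral_of_le (by norm_num), integral_Ioc_eq_integral_Ioo]
  refine mul_le_mul_right ((ofReal_integral_le _ _).trans ?_) _
  refine setLIntegral_mono' measurableSet_Ioo fun t ht => ?_
  have h0 : 0 ≤ 1 - t ^ 2 := by nlinarith [ht.1, ht.2]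
  rw [ENNReal.ofReal_mul (by positivity)]
  refine le_of_eq ?_
  congr 3
  · push_cast; ring
  · push_cast; ring

lemma iUnion_Ioo : ⋃ k : ℕ, Set.Ioo (1 / ((k : ℝ) + 2)) (1 - 1 / ((k : ℝ) + 2)) =
    Set.Ioo (0 : ℝ) 1 := by
  ext r
  simp only [Set.mem_iUnion, Set.mem_Ioo]
  constructor
  · rintro ⟨k, h1, h2⟩
    have : (0 : ℝ) < 1 / ((k : ℝ) + 2) := by positivity
    constructor <;> linarith
  · rintro ⟨h1, h2⟩
    obtain ⟨k, hk⟩ := exists_nat_one_div_lt (lt_min h1 (sub_pos.2 h2))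
    have h3 : 1 / ((k : ℝ) + 2) ≤ 1 / ((k : ℝ) + 1) :=
      one_div_le_one_div_of_le (by positivity) (by linarith)
    have h4 := lt_of_le_of_lt h3 hk
    rw [lt_min_iff] at h4
    exact ⟨k, h4.1, by linarith [h4.2]⟩

/-- The sharp fractional Hardy inequality, obtained from `hardy_trunc` by monotone convergence. -/
lemma hardy {m : ℕ} (hm : 1 ≤ m) {p α : ℝ} (hp : 1 ≤ p) (hσ : 0 < p * α)
    (hσn : p * α < (m : ℝ) + 1)
    {u : EuclideanSpace ℝ (Fin (m + 1)) → ℝ} (hu : Measurable u) (hH : harE m p (p * α) u < ∞) :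
    ENNReal.ofReal (hardyConst (m + 1) α p) * harE m p (p * α) u ≤ gagE m p (p * α) u := by
  have hp0 : 0 < p := by linarith
  set β : ℝ := ((m : ℝ) + 1 - p * α) / p with hβdef
  have hβ : 0 < β := div_pos (by linarith) hp0
  have hβp : β * p = (m : ℝ) + 1 - p * α := div_mul_cancel₀ _ hp0.ne'
  let I : ℕ → Set ℝ := fun k => Set.Ioo (1 / ((k : ℝ) + 2)) (1 - 1 / ((k : ℝ) + 2))
  have hmono : Monotone I := by
    intro k l hkl
    have hkl' : (k : ℝ) ≤ l := by exact_mod_cast hkl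
    have : 1 / ((l : ℝ) + 2) ≤ 1 / ((k : ℝ) + 2) :=
      one_div_le_one_div_of_le (by positivity) (by linarith)
    exact Set.Ioo_subset_Ioo this (by linarith)
  have hlim : ENNReal.ofReal (hardyConst (m + 1) α p) ≤
      ⨆ k : ℕ, 2 * cTrunc m p (p * α) β (1 / ((k : ℝ) + 2)) (1 - 1 / ((k : ℝ) + 2)) := by
    rw [← ENNReal.mul_iSup]
    unfold cTrunc
    rw [← setLIntegral_iUnion_of_directed _ (s := I) hmono.directed_le, iUnion_Ioo]
    unfold hardyConst
    rw [ENNReal.ofReal_mul (by norm_num), ENNReal.ofReal_ofNat,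
      intervalIntegral.integral_of_le (by norm_num), integral_Ioc_eq_integral_Ioo]
    refine mul_le_mul_right ((ofReal_integral_le _ _).trans ?_) _
    refine setLIntegral_mono' measurableSet_Ioo fun r hr => ?_
    have hr0 : 0 < r := hr.1
    rw [ENNReal.ofReal_mul (by positivity)]
    have : (((m + 1 : ℕ) : ℝ) - p * α) / p = β := by rw [hβdef]; push_cast; ring
    rw [this]
    exact mul_le_mul_right (Phi_le hm α p r) _
  refine (mul_le_mul_left hlim _).trans ?_
  rw [ENNReal.iSup_mul]
  refine iSup_le fun k => ?_
  have : (0 : ℝ) < 1 / ((k : ℝ) + 2) := by positivity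
  exact hardy_trunc hm hp hσ hβ hβp this (by linarith) hu hH

/-! ### Finiteness and positivity of the functional -/

lemma lintegral_near_lt_top (m : ℕ) {a : ℝ} (ha : a < (m : ℝ) + 1) :
    ∫⁻ w : EuclideanSpace ℝ (Fin (m + 1)),
      (Set.Iio (1 : ℝ)).indicator (fun r => ENNReal.ofReal (r ^ (-a))) ‖w‖ < ∞ := by
  rw [lintegral_radial (by omega) (Measurable.indicator (by fun_prop) measurableSet_Iio)]
  refine ENNReal.mul_lt_top ENNReal.ofReal_lt_top ?_
  have hI : IntegrableOn (fun r : ℝ => r ^ ((m : ℝ) - a)) (Set.Ioo 0 1) :=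
    (intervalIntegral.integrableOn_Ioo_rpow_iff zero_lt_one).2 (by linarith)
  refine lt_of_eq_of_lt ?_ hI.lintegral_lt_top
  rw [← Set.Ioi_inter_Iio, Set.inter_comm, ← setLIntegral_indicator measurableSet_Iio]
  refine setLIntegral_congr_fun measurableSet_Ioi fun r hr => ?_
  have hr0 : 0 < r := hr
  by_cases h : r ∈ Set.Iio (1 : ℝ)
  · simp only [Set.indicator_of_mem h]
    rw [← ENNReal.ofReal_mul (by positivity), Nat.add_sub_cancel, ← Real.rpow_natCast,
      ← Real.rpow_add hr0, sub_eq_add_neg]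
  · simp only [Set.indicator_of_notMem h, mul_zero]

lemma lintegral_far_lt_top (m : ℕ) {a : ℝ} (ha : (m : ℝ) + 1 < a) :
    ∫⁻ w : EuclideanSpace ℝ (Fin (m + 1)),
      (Set.Ici (1 : ℝ)).indicator (fun r => ENNReal.ofReal (r ^ (-a))) ‖w‖ < ∞ := by
  rw [lintegral_radial (by omega) (Measurable.indicator (by fun_prop) measurableSet_Ici)]
  refine ENNReal.mul_lt_top ENNReal.ofReal_lt_top ?_
  have hI : IntegrableOn (fun r : ℝ => r ^ ((m : ℝ) - a)) (Set.Ici 1) :=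
    (integrableOn_Ici_iff_integrableOn_Ioi (by simp)).2
      (integrableOn_Ioi_rpow_of_lt (by linarith) zero_lt_one)
  refine lt_of_eq_of_lt ?_ hI.lintegral_lt_top
  have hs : Set.Ici (1 : ℝ) = Set.Ici 1 ∩ Set.Ioi 0 :=
    (Set.inter_eq_left.2 (Set.Ici_subset_Ioi.2 zero_lt_one)).symm
  rw [hs, ← setLIntegral_indicator measurableSet_Ici, ← hs]
  refine setLIntegral_congr_fun measurableSet_Ioi fun r hr => ?_
  have hr0 : 0 < r := hr
  by_cases h : r ∈ Set.Ici (1 : ℝ)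
  · simp only [Set.indicator_of_mem h]
    rw [← ENNReal.ofReal_mul (by positivity), Nat.add_sub_cancel, ← Real.rpow_natCast,
      ← Real.rpow_add hr0, sub_eq_add_neg]
  · simp only [Set.indicator_of_notMem h, mul_zero]

lemma hasCompactSupport_abs_rpow {X : Type*} [TopologicalSpace X] {p : ℝ} (hp : 0 < p)
    {u : X → ℝ} (hc : HasCompactSupport u) : HasCompactSupport fun x => |u x| ^ p :=
  hc.comp_left (g := fun t : ℝ => |t| ^ p) (by simp [hp.ne'])

lemma continuous_abs_rpow {X : Type*} [TopologicalSpace X] {p : ℝ} (hp : 0 < p)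
    {u : X → ℝ} (hu : Continuous u) : Continuous fun x => |u x| ^ p :=
  hu.abs.rpow_const fun _ => Or.inr hp.le

lemma exists_bound {X : Type*} [TopologicalSpace X] {u : X → ℝ} (hu : Continuous u)
    (hc : HasCompactSupport u) : ∃ M, 0 ≤ M ∧ ∀ x, |u x| ≤ M := by
  obtain ⟨M, hM⟩ := hc.exists_bound_of_continuous hu
  exact ⟨max M 0, le_max_right _ _, fun x => (hM x).trans (le_max_left _ _)⟩

lemma harE_lt_top {m : ℕ} {p σ : ℝ} (hp : 0 < p) (hσ : 0 ≤ σ) (hσn : σ < (m : ℝ) + 1)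
    {u : EuclideanSpace ℝ (Fin (m + 1)) → ℝ} (hu : Continuous u) (hc : HasCompactSupport u) :
    harE m p σ u < ∞ := by
  obtain ⟨M, hM0, hM⟩ := exists_bound hu hc
  have hI : Integrable (fun x => |u x| ^ p) :=
    (continuous_abs_rpow hp hu).integrable_of_hasCompactSupport (hasCompactSupport_abs_rpow hp hc)
  have hle : harE m p σ u ≤ ∫⁻ x : EuclideanSpace ℝ (Fin (m + 1)),
      (ENNReal.ofReal (M ^ p) *
        (Set.Iio (1 : ℝ)).indicator (fun r => ENNReal.ofReal (r ^ (-σ))) ‖x‖ +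
        ENNReal.ofReal (|u x| ^ p)) := by
    refine lintegral_mono fun x => ?_
    by_cases h : ‖x‖ ∈ Set.Iio (1 : ℝ)
    · rw [Set.indicator_of_mem h, ENNReal.ofReal_mul (by positivity)]
      exact (mul_le_mul_left (ENNReal.ofReal_le_ofReal
        (Real.rpow_le_rpow (abs_nonneg _) (hM x) hp.le)) _).trans le_self_add
    · have h1 : 1 ≤ ‖x‖ := not_lt.1 h
      rw [Set.indicator_of_notMem h, mul_zero, zero_add]
      exact ENNReal.ofReal_le_ofReal (mul_le_of_le_one_right (by positivity)
        (Real.rpow_le_one_of_one_le_of_nonpos h1 (by linarith)))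
  refine hle.trans_lt ?_
  have m1 : Measurable ((Set.Iio (1 : ℝ)).indicator
      (fun r : ℝ => ENNReal.ofReal (r ^ (-σ)))) :=
    Measurable.indicator (by fun_prop) measurableSet_Iio
  rw [lintegral_add_right _ (by fun_prop), lintegral_const_mul _ (by fun_prop)]
  exact ENNReal.add_lt_top.2 ⟨ENNReal.mul_lt_top ENNReal.ofReal_lt_top
    (lintegral_near_lt_top m hσn), hI.lintegral_lt_top⟩

/-- The Gagliardo energy of a test function is finite: near the diagonal
the Lipschitz bound is used (`σ < p`), away from it boundedness (`0 < σ`). -/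
lemma gagE_lt_top {m : ℕ} {p σ : ℝ} (hp : 0 < p) (hσ : 0 < σ) (hσp : σ < p)
    {u : EuclideanSpace ℝ (Fin (m + 1)) → ℝ} (hu : ContDiff ℝ (⊤ : ℕ∞) u)
    (hc : HasCompactSupport u) : gagE m p σ u < ∞ := by
  obtain ⟨M, hM0, hM⟩ := exists_bound hu.continuous hc
  obtain ⟨L, hL⟩ := ContDiff.lipschitzWith_of_hasCompactSupport hc hu (by simp)
  set κ := (m : ℝ) + 1 + σ with hκ
  let h : ℝ → ℝ≥0∞ := fun r => ENNReal.ofReal ((L : ℝ) ^ p) *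
    (Set.Iio (1 : ℝ)).indicator (fun r => ENNReal.ofReal (r ^ (-(κ - p)))) r +
    ENNReal.ofReal ((2 * M) ^ p) *
    (Set.Ici (1 : ℝ)).indicator (fun r => ENNReal.ofReal (r ^ (-κ))) r
  have m1 : Measurable ((Set.Iio (1 : ℝ)).indicator
      (fun r : ℝ => ENNReal.ofReal (r ^ (-(κ - p))))) :=
    Measurable.indicator (by fun_prop) measurableSet_Iio
  have m2 : Measurable ((Set.Ici (1 : ℝ)).indicator
      (fun r : ℝ => ENNReal.ofReal (r ^ (-κ)))) :=
    Measurable.indicator (by fun_prop) measurableSet_Ici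
  have hh : Measurable h := by fun_prop
  have hfin : ∫⁻ w : EuclideanSpace ℝ (Fin (m + 1)), h ‖w‖ < ∞ := by
    simp only [h]
    rw [lintegral_add_left (by fun_prop), lintegral_const_mul _ (by fun_prop),
      lintegral_const_mul _ (by fun_prop)]
    exact ENNReal.add_lt_top.2 ⟨ENNReal.mul_lt_top ENNReal.ofReal_lt_top
      (lintegral_near_lt_top m (by linarith)), ENNReal.mul_lt_top ENNReal.ofReal_lt_top
      (lintegral_far_lt_top m (by linarith))⟩
  have hD : ∀ x y, ENNReal.ofReal (|u x - u y| ^ p * ‖x - y‖ ^ (-κ)) ≤ h ‖x - y‖ := by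
    intro x y
    by_cases hd : ‖x - y‖ < 1
    · have hd' : ‖x - y‖ ∉ Set.Ici (1 : ℝ) := not_le.2 hd
      simp only [h, Set.indicator_of_mem (show ‖x - y‖ ∈ Set.Iio (1 : ℝ) from hd),
        Set.indicator_of_notMem hd', mul_zero, add_zero]
      rw [← ENNReal.ofReal_mul (by positivity)]
      refine ENNReal.ofReal_le_ofReal ?_
      rcases (norm_nonneg (x - y)).eq_or_lt with h0 | h0
      · have : x = y := sub_eq_zero.1 (norm_eq_zero.1 h0.symm)
        subst this
        simp only [sub_self, abs_zero, Real.zero_rpow hp.ne', zero_mul]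
        positivity
      · have h1 : |u x - u y| ≤ L * ‖x - y‖ := by
          simpa [dist_eq_norm] using hL.dist_le_mul x y
        calc |u x - u y| ^ p * ‖x - y‖ ^ (-κ) ≤ (L * ‖x - y‖) ^ p * ‖x - y‖ ^ (-κ) := by gcongr
          _ = (L : ℝ) ^ p * ‖x - y‖ ^ (-(κ - p)) := by
            rw [Real.mul_rpow L.coe_nonneg h0.le, mul_assoc, ← Real.rpow_add h0]
            congr 2; ring
    · have hd' : ‖x - y‖ ∉ Set.Iio (1 : ℝ) := hd
      simp only [h, Set.indicator_of_mem (show ‖x - y‖ ∈ Set.Ici (1 : ℝ) from not_lt.1 hd),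
        Set.indicator_of_notMem hd', mul_zero, zero_add]
      rw [← ENNReal.ofReal_mul (by positivity)]
      refine ENNReal.ofReal_le_ofReal ?_
      have h1 : |u x - u y| ≤ 2 * M := (abs_sub _ _).trans (by linarith [hM x, hM y])
      gcongr
  have hKm : MeasurableSet (tsupport u) := (isClosed_tsupport u).measurableSet
  let χ := (tsupport u).indicator (1 : EuclideanSpace ℝ (Fin (m + 1)) → ℝ≥0∞)
  have hχ : Measurable χ := measurable_one.indicator hKm
  -- the integrand vanishes unless one of the two points lies in the support
  have hD2 : ∀ x y, ENNReal.ofReal (|u x - u y| ^ p * ‖x - y‖ ^ (-κ)) ≤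
      χ x * h ‖x - y‖ + χ y * h ‖x - y‖ := by
    intro x y
    by_cases hx : x ∈ tsupport u
    · simp only [χ, Set.indicator_of_mem hx, Pi.one_apply, one_mul]
      exact (hD x y).trans le_self_add
    · by_cases hy : y ∈ tsupport u
      · simp only [χ, Set.indicator_of_mem hy, Pi.one_apply, one_mul]
        exact (hD x y).trans le_add_self
      · simp [image_eq_zero_of_notMem_tsupport hx, image_eq_zero_of_notMem_tsupport hy,
          Real.zero_rpow hp.ne']
  have hone : ∫⁻ x, ∫⁻ y, χ x * h ‖x - y‖ < ∞ := by
    have : ∀ x, ∫⁻ y, χ x * h ‖x - y‖ =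
        χ x * ∫⁻ w : EuclideanSpace ℝ (Fin (m + 1)), h ‖w‖ := fun x => by
      rw [lintegral_const_mul _ (by fun_prop),
        lintegral_sub_left_eq_self (fun w : EuclideanSpace ℝ (Fin (m + 1)) => h ‖w‖) x]
    simp only [this]
    rw [lintegral_mul_const _ hχ, lintegral_indicator_one hKm]
    exact ENNReal.mul_lt_top hc.measure_lt_top hfin
  have htwo : ∫⁻ x, ∫⁻ y, χ y * h ‖x - y‖ < ∞ := by
    rw [lintegral_lintegral_swap (by fun_prop)]
    simpa only [norm_sub_rev] using hone
  refine lt_of_le_of_lt (lintegral_mono fun x => lintegral_mono fun y => hD2 x y) ?_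
  have hm1 : ∀ x, Measurable fun y => χ x * h ‖x - y‖ := fun x => by fun_prop
  rw [lintegral_congr fun x => lintegral_add_left (hm1 x) (fun y => χ y * h ‖x - y‖),
    lintegral_add_left (Measurable.lintegral_prod_right' (f := fun z : EuclideanSpace ℝ
    (Fin (m + 1)) × EuclideanSpace ℝ (Fin (m + 1)) => χ z.1 * h ‖z.1 - z.2‖) (by fun_prop))]
  exact ENNReal.add_lt_top.2 ⟨hone, htwo⟩

lemma integral_har_eq (m : ℕ) (p σ : ℝ) {u : EuclideanSpace ℝ (Fin (m + 1)) → ℝ}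
    (hu : Measurable u) :
    ∫ x, |u x| ^ p / ‖x‖ ^ σ = (harE m p σ u).toReal := by
  rw [harE, integral_eq_lintegral_of_nonneg_ae (Eventually.of_forall fun x => by positivity)
    (Measurable.aestronglyMeasurable (by fun_prop))]
  simp only [Real.rpow_neg (norm_nonneg _), div_eq_mul_inv]

lemma integral_gag_eq {m : ℕ} {p σ : ℝ} {u : EuclideanSpace ℝ (Fin (m + 1)) → ℝ}
    (hu : Measurable u) (hG : gagE m p σ u < ∞) :
    ∫ x, ∫ y, |u x - u y| ^ p / ‖x - y‖ ^ (((m + 1 : ℕ) : ℝ) + σ) = (gagE m p σ u).toReal := by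
  have hD : Measurable fun z : EuclideanSpace ℝ (Fin (m + 1)) × EuclideanSpace ℝ (Fin (m + 1)) =>
      ENNReal.ofReal (|u z.1 - u z.2| ^ p * ‖z.1 - z.2‖ ^ (-((m : ℝ) + 1 + σ))) := by fun_prop
  have h1 : ∀ x, ∫ y, |u x - u y| ^ p / ‖x - y‖ ^ (((m + 1 : ℕ) : ℝ) + σ) = (∫⁻ y,
      ENNReal.ofReal (|u x - u y| ^ p * ‖x - y‖ ^ (-((m : ℝ) + 1 + σ)))).toReal := fun x => by
    rw [integral_eq_lintegral_of_nonneg_ae (Eventually.of_forall fun y => by positivity)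
      (Measurable.aestronglyMeasurable (by fun_prop))]
    simp only [Real.rpow_neg (norm_nonneg _), div_eq_mul_inv, Nat.cast_add, Nat.cast_one]
  simp only [h1]
  exact integral_toReal hD.lintegral_prod_right'.aemeasurable
    (ae_lt_top hD.lintegral_prod_right' hG.ne)

/-- Strict positivity of the functional, from the sharp Hardy inequality. -/
lemma energy_pos {m : ℕ} (hm : 1 ≤ m) {p α μ : ℝ} (hp : 1 ≤ p) (hα : α ∈ Set.Ioo (0 : ℝ) 1)
    (hσn : p * α < (m : ℝ) + 1) (hμ0 : 0 ≤ μ) (hμ : μ < hardyConst (m + 1) α p)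
    {u : EuclideanSpace ℝ (Fin (m + 1)) → ℝ} (hu : ContDiff ℝ (⊤ : ℕ∞) u)
    (hc : HasCompactSupport u) (hne : ∃ x, u x ≠ 0) :
    0 < (∫ x, ∫ y, |u x - u y| ^ p / ‖x - y‖ ^ (((m + 1 : ℕ) : ℝ) + p * α)) -
      μ * ∫ x, |u x| ^ p / ‖x‖ ^ (p * α) := by
  have hp0 : 0 < p := by linarith
  have hσ : 0 < p * α := mul_pos hp0 hα.1
  have hum : Measurable u := hu.continuous.measurable
  have hH := harE_lt_top hp0 hσ.le hσn hu.continuous hc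
  have hG := gagE_lt_top (m := m) hp0 hσ (by nlinarith [hα.2]) hu hc
  rw [integral_har_eq m p _ hum, integral_gag_eq hum hG]
  have hle := ENNReal.toReal_mono hG.ne (hardy hm hp hσ hσn hum hH)
  rw [ENNReal.toReal_mul, ENNReal.toReal_ofReal (hμ0.trans hμ.le)] at hle
  have hpos : 0 < (harE m p (p * α) u).toReal := by
    refine ENNReal.toReal_pos (fun h0 => ?_) hH.ne
    obtain ⟨x₀, hx₀⟩ := hne
    rw [harE, lintegral_eq_zero_iff (by fun_prop)] at h0
    have hz : u =ᵐ[volume] 0 := by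
      filter_upwards [h0, ae_ne_zero m] with x hx hx0
      by_contra hux
      have h1 : 0 < |u x| := abs_pos.2 hux
      have h2 : 0 < ‖x‖ := norm_pos_iff.2 hx0
      exact (ENNReal.ofReal_pos.2 (by positivity)).ne' hx
    exact hx₀ (congrFun ((hu.continuous.ae_eq_iff_eq volume continuous_zero).1 hz) x₀)
  nlinarith

/-! ### Test functions of small energy -/

/-- Both growth alternatives give annuli `λ/2 ≤ ‖x - z‖ ≤ 2λ` on which `‖x - z‖^σ V` is
arbitrarily large. -/
lemma exists_annulus {E : Type*} [NormedAddCommGroup E] {σ : ℝ} {V : E → ℝ}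
    (hgrow : Tendsto (fun x => ‖x‖ ^ σ * V x) (Bornology.cobounded E) atTop ∨
      ∃ z : E, Tendsto (fun x => ‖x - z‖ ^ σ * V x) (nhdsWithin z {z}ᶜ) atTop) :
    ∃ z : E, ∀ K : ℝ, ∃ l : ℝ, 0 < l ∧ ∀ x, l / 2 ≤ ‖x - z‖ → ‖x - z‖ ≤ 2 * l →
      K ≤ ‖x - z‖ ^ σ * V x := by
  rcases hgrow with h | ⟨z, h⟩
  · refine ⟨0, fun K => ?_⟩
    obtain ⟨R, -, hR⟩ := (Filter.hasBasis_cobounded_norm (E := E)).mem_iff.1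
      (h.eventually_ge_atTop K)
    refine ⟨2 * max R 1, by positivity, fun x hx _ => ?_⟩
    rw [sub_zero] at hx ⊢
    exact hR (show R ≤ ‖x‖ by linarith [le_max_left R 1])
  · refine ⟨z, fun K => ?_⟩
    obtain ⟨ε, hε, hs⟩ := Metric.mem_nhdsWithin_iff.1 (h.eventually_ge_atTop K)
    refine ⟨ε / 3, by positivity, fun x hx hx' => hs ⟨?_, ?_⟩⟩
    · rw [mem_ball_iff_norm]; linarith
    · rintro rfl
      rw [sub_self, norm_zero] at hx
      linarith

lemma integral_scale {m : ℕ} (f : EuclideanSpace ℝ (Fin (m + 1)) → ℝ) {l : ℝ} (hl : 0 < l)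
    (z : EuclideanSpace ℝ (Fin (m + 1))) :
    ∫ x, f (l⁻¹ • (x - z)) = l ^ (m + 1) * ∫ x, f x := by
  rw [integral_sub_right_eq_self (fun x => f (l⁻¹ • x)) z,
    Measure.integral_comp_inv_smul_of_nonneg _ _ hl.le, finrank_euclideanSpace_fin, smul_eq_mul]

/-- Scaling of the Gagliardo energy. -/
lemma integral_gag_scale {m : ℕ} {p κ : ℝ} {φ : EuclideanSpace ℝ (Fin (m + 1)) → ℝ} {c l : ℝ}
    (hc : 0 ≤ c) (hl : 0 < l) (z : EuclideanSpace ℝ (Fin (m + 1))) :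
    ∫ x, ∫ y, |c * φ (l⁻¹ • (x - z)) - c * φ (l⁻¹ • (y - z))| ^ p / ‖x - y‖ ^ κ =
      c ^ p * (l ^ (-κ) * (l ^ (m + 1) * (l ^ (m + 1) *
        ∫ x, ∫ y, |φ x - φ y| ^ p / ‖x - y‖ ^ κ))) := by
  have h1 : ∀ x y : EuclideanSpace ℝ (Fin (m + 1)),
      |c * φ (l⁻¹ • (x - z)) - c * φ (l⁻¹ • (y - z))| ^ p / ‖x - y‖ ^ κ =
      c ^ p * l ^ (-κ) * (fun a b => |φ a - φ b| ^ p / ‖a - b‖ ^ κ)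
        (l⁻¹ • (x - z)) (l⁻¹ • (y - z)) := fun x y => by
    dsimp only
    have h2 : ‖x - y‖ = l * ‖l⁻¹ • (x - z) - l⁻¹ • (y - z)‖ := by
      rw [← smul_sub, norm_smul, norm_inv, Real.norm_of_nonneg hl.le, mul_inv_cancel_left₀ hl.ne',
        sub_sub_sub_cancel_right]
    rw [← mul_sub, abs_mul, abs_of_nonneg hc, Real.mul_rpow hc (abs_nonneg _), h2,
      Real.mul_rpow hl.le (norm_nonneg _), Real.rpow_neg hl.le]
    simp only [div_eq_mul_inv, mul_inv]
    ring
  simp only [h1, integral_const_mul]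
  have h3 : ∀ x : EuclideanSpace ℝ (Fin (m + 1)),
      ∫ y, |φ (l⁻¹ • (x - z)) - φ (l⁻¹ • (y - z))| ^ p /
        ‖l⁻¹ • (x - z) - l⁻¹ • (y - z)‖ ^ κ =
      l ^ (m + 1) * ∫ y, |φ (l⁻¹ • (x - z)) - φ y| ^ p / ‖l⁻¹ • (x - z) - y‖ ^ κ := fun x =>
    integral_scale (fun b => |φ (l⁻¹ • (x - z)) - φ b| ^ p / ‖l⁻¹ • (x - z) - b‖ ^ κ) hl z
  simp only [h3, integral_const_mul]
  rw [integral_scale (fun a => ∫ y, |φ a - φ y| ^ p / ‖a - y‖ ^ κ) hl z]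
  ring

/-- A nonzero test function supported in the annulus `1/2 ≤ ‖x‖ ≤ 2`. -/
lemma exists_test (m : ℕ) : ∃ φ : EuclideanSpace ℝ (Fin (m + 1)) → ℝ,
    ContDiff ℝ (⊤ : ℕ∞) φ ∧ HasCompactSupport φ ∧ (∃ x, φ x ≠ 0) ∧
      ∀ x, φ x ≠ 0 → 1 / 2 ≤ ‖x‖ ∧ ‖x‖ ≤ 2 := by
  obtain ⟨e, he⟩ := exists_norm_eq (EuclideanSpace ℝ (Fin (m + 1))) zero_le_one
  let b : ContDiffBump e := ⟨1 / 4, 1 / 2, by norm_num, by norm_num⟩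
  refine ⟨b, b.contDiff, b.hasCompactSupport, ⟨e, ?_⟩, fun x hx => ?_⟩
  · rw [b.one_of_mem_closedBall (Metric.mem_closedBall_self b.rIn_pos.le)]
    exact one_ne_zero
  · have hx' : x ∈ Metric.ball e (1 / 2) := by
      have : x ∈ Function.support b := hx
      rwa [b.support_eq] at this
    rw [mem_ball_iff_norm] at hx'
    have h1 := norm_sub_norm_le x e
    have h2 := norm_sub_norm_le e x
    rw [norm_sub_rev] at h2
    constructor <;> linarith

/-- Rescaling a fixed test function to an annulus where `V` is large and normalising it makes
its Gagliardo energy arbitrarily small. -/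
lemma exists_small {m : ℕ} {p σ : ℝ} (hp : 0 < p) (hσ : 0 < σ)
    {V : EuclideanSpace ℝ (Fin (m + 1)) → ℝ} (hVloc : LocallyIntegrable V volume)
    (hgrow : Tendsto (fun x => ‖x‖ ^ σ * V x)
        (Bornology.cobounded (EuclideanSpace ℝ (Fin (m + 1)))) atTop ∨
      ∃ z : EuclideanSpace ℝ (Fin (m + 1)),
        Tendsto (fun x => ‖x - z‖ ^ σ * V x) (nhdsWithin z {z}ᶜ) atTop)
    {ε : ℝ} (hε : 0 < ε) :
    ∃ u : EuclideanSpace ℝ (Fin (m + 1)) → ℝ, ContDiff ℝ (⊤ : ℕ∞) u ∧ HasCompactSupport u ∧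
      (∫ x, V x * |u x| ^ p) = 1 ∧
      ∫ x, ∫ y, |u x - u y| ^ p / ‖x - y‖ ^ (((m + 1 : ℕ) : ℝ) + σ) < ε := by
  obtain ⟨φ, hφ, hφc, ⟨x₀, hx₀⟩, hφs⟩ := exists_test m
  obtain ⟨z, hz⟩ := exists_annulus hgrow
  set κ := ((m + 1 : ℕ) : ℝ) + σ with hκ
  set G := ∫ x, ∫ y, |φ x - φ y| ^ p / ‖x - y‖ ^ κ
  have hG : 0 ≤ G := integral_nonneg fun x => integral_nonneg fun y => by positivity
  set c₁ := ∫ x, |φ x| ^ p with hc₁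
  have hc₁0 : 0 < c₁ :=
    (continuous_abs_rpow hp hφ.continuous).integral_pos_of_hasCompactSupport_nonneg_nonzero
      (hasCompactSupport_abs_rpow hp hφc) (fun x => by positivity)
      (x := x₀) (Real.rpow_pos_of_pos (abs_pos.2 hx₀) p).ne'
  -- the normalised energy will be at most `2^σ G / (K c₁)`, so this `K` makes it less than `ε`
  set K := 2 ^ σ * (G + 1) / (c₁ * ε) with hK
  have hK0 : 0 < K := by positivity
  obtain ⟨l, hl, hV⟩ := hz K
  let g : EuclideanSpace ℝ (Fin (m + 1)) → EuclideanSpace ℝ (Fin (m + 1)) :=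
    fun x => l⁻¹ • (x - z)
  have hgs : ContDiff ℝ (⊤ : ℕ∞) g := (contDiff_id.sub contDiff_const).const_smul _
  have hgc : HasCompactSupport fun x => φ (g x) := by
    exact hφc.comp_homeomorph ((Homeomorph.subRight z).trans
      (Homeomorph.smulOfNeZero l⁻¹ (inv_ne_zero hl.ne')))
  have hgφ : ContDiff ℝ (⊤ : ℕ∞) fun x => φ (g x) := hφ.comp hgs
  set N := ∫ x, V x * |φ (g x)| ^ p with hN
  have hNge : K * (2 * l) ^ (-σ) * (l ^ (m + 1) * c₁) ≤ N := by
    rw [hc₁, ← integral_scale (fun x => |φ x| ^ p) hl z, ← integral_const_mul]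
    have hcont := continuous_abs_rpow hp hgφ.continuous
    have hcs := hasCompactSupport_abs_rpow hp hgc
    refine integral_mono ((hcont.integrable_of_hasCompactSupport hcs).const_mul _)
      (hVloc.integrable_smul_right_of_hasCompactSupport hcont hcs) fun x => ?_
    by_cases h0 : φ (g x) = 0
    · change _ * |φ (g x)| ^ p ≤ V x * |φ (g x)| ^ p
      simp [h0, Real.zero_rpow hp.ne']
    · change _ * |φ (g x)| ^ p ≤ V x * |φ (g x)| ^ p
      refine mul_le_mul_of_nonneg_right ?_ (by positivity)
      have hn : ‖g x‖ = l⁻¹ * ‖x - z‖ := by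
        rw [norm_smul, norm_inv, Real.norm_of_nonneg hl.le]
      obtain ⟨h1, h2⟩ := hφs _ h0
      rw [hn, inv_mul_eq_div] at h1 h2
      rw [le_div_iff₀ hl] at h1
      rw [div_le_iff₀ hl] at h2
      have hx := hV x (by linarith) h2
      have hpos : 0 < ‖x - z‖ := by linarith [half_pos hl]
      have hV0 : 0 < V x := pos_of_mul_pos_right (hK0.trans_le hx) (by positivity)
      rw [Real.rpow_neg (by positivity), ← div_eq_mul_inv, div_le_iff₀ (by positivity),
        mul_comm (V x)]
      refine hx.trans ?_
      gcongr
  have hN0 : 0 < N := lt_of_lt_of_le (by positivity) hNge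
  have hcp : (N ^ (-(1 / p))) ^ p = N⁻¹ := by
    rw [← Real.rpow_mul hN0.le, neg_mul, one_div_mul_cancel hp.ne', Real.rpow_neg_one]
  refine ⟨fun x => N ^ (-(1 / p)) * φ (g x), contDiff_const.mul hgφ, hgc.mul_left, ?_, ?_⟩
  · have : ∀ x, V x * |N ^ (-(1 / p)) * φ (g x)| ^ p = N⁻¹ * (V x * |φ (g x)| ^ p) := fun x => by
      rw [abs_mul, abs_of_nonneg (by positivity), Real.mul_rpow (by positivity) (abs_nonneg _), hcp]
      ring
    simp only [this]
    rw [integral_const_mul, ← hN, inv_mul_cancel₀ hN0.ne']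
  · rw [integral_gag_scale (by positivity) hl z, hcp, inv_mul_lt_iff₀ hN0]
    have e1 : l ^ (-κ) * l ^ (m + 1) = l ^ (-σ) := by
      rw [← Real.rpow_natCast, ← Real.rpow_add hl, hκ]; congr 1; ring
    have e2 : K * (2 * l) ^ (-σ) * (l ^ (m + 1) * c₁) * ε =
        l ^ (-σ) * (l ^ (m + 1) * (G + 1)) := by
      rw [hK, Real.mul_rpow zero_le_two hl.le, Real.rpow_neg zero_le_two]
      field_simp
    calc l ^ (-κ) * (l ^ (m + 1) * (l ^ (m + 1) * G)) = l ^ (-σ) * (l ^ (m + 1) * G) := by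
          rw [← mul_assoc, e1]
      _ < l ^ (-σ) * (l ^ (m + 1) * (G + 1)) := by gcongr; linarith
      _ = K * (2 * l) ^ (-σ) * (l ^ (m + 1) * c₁) * ε := e2.symm
      _ ≤ N * ε := by gcongr

end FracHardy

open MeasureTheory Filter

/-- If the weight `V ≥ 0` satisfies `|x|^{pα}V(x) → ∞` as `|x| → ∞`, or
`|x−z|^{pα}V(x) → ∞` as `x → z` for some `z`, then the infimum of the Hardy–Rayleigh
functional over the constraint `∫ V|u|^p = 1` is `0`, and it is not achieved. -/
theorem infimum_zero_not_achieved (n : ℕ) (hn : 2 ≤ n) (α p μ : ℝ)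
    (hα : α ∈ Set.Ioo (0 : ℝ) 1) (hp : 2 ≤ p) (hpn : p < n / α)
    (hμ0 : 0 ≤ μ) (hμ : μ < hardyConst n α p)
    (V : EuclideanSpace ℝ (Fin n) → ℝ) (hV0 : ∀ x, 0 ≤ V x) (hVm : Measurable V)
    (hVloc : LocallyIntegrable V volume) (hVne : ¬ V =ᵐ[volume] 0)
    (hgrow :
      Tendsto (fun x => ‖x‖ ^ (p * α) * V x)
          (Bornology.cobounded (EuclideanSpace ℝ (Fin n))) atTop ∨
        ∃ z : EuclideanSpace ℝ (Fin n),
          Tendsto (fun x => ‖x - z‖ ^ (p * α) * V x) (nhdsWithin z {z}ᶜ) atTop) :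
    IsGLB
        {J : ℝ | ∃ u : EuclideanSpace ℝ (Fin n) → ℝ,
          ContDiff ℝ (⊤ : ℕ∞) u ∧ HasCompactSupport u ∧ (∫ x, V x * |u x| ^ p) = 1 ∧
            J = (∫ x, ∫ y, |u x - u y| ^ p / ‖x - y‖ ^ ((n : ℝ) + p * α)) -
                  μ * ∫ x, |u x| ^ p / ‖x‖ ^ (p * α)} 0 ∧
      ∀ u : EuclideanSpace ℝ (Fin n) → ℝ, ContDiff ℝ (⊤ : ℕ∞) u → HasCompactSupport u →
        (∫ x, V x * |u x| ^ p) = 1 →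
          (∫ x, ∫ y, |u x - u y| ^ p / ‖x - y‖ ^ ((n : ℝ) + p * α)) -
              μ * ∫ x, |u x| ^ p / ‖x‖ ^ (p * α) ≠ 0 := by
  obtain ⟨m, rfl⟩ : ∃ m, n = m + 1 := ⟨n - 1, by omega⟩
  have hm : 1 ≤ m := by omega
  have hp0 : 0 < p := by linarith
  have hσn : p * α < (m : ℝ) + 1 := by
    have := (lt_div_iff₀ hα.1).1 hpn
    push_cast at this
    exact this
  have hpos : ∀ u : EuclideanSpace ℝ (Fin (m + 1)) → ℝ, ContDiff ℝ (⊤ : ℕ∞) u →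
      HasCompactSupport u → (∫ x, V x * |u x| ^ p) = 1 →
      0 < (∫ x, ∫ y, |u x - u y| ^ p / ‖x - y‖ ^ (((m + 1 : ℕ) : ℝ) + p * α)) -
        μ * ∫ x, |u x| ^ p / ‖x‖ ^ (p * α) := by
    intro u hu hc h1
    refine FracHardy.energy_pos hm (by linarith) hα hσn hμ0 hμ hu hc ?_
    by_contra! h0
    simp [h0, Real.zero_rpow hp0.ne'] at h1
  refine ⟨⟨?_, fun b hb => le_of_forall_pos_le_add fun ε hε => ?_⟩,
    fun u hu hc h1 => (hpos u hu hc h1).ne'⟩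
  · rintro J ⟨u, hu, hc, h1, rfl⟩
    exact (hpos u hu hc h1).le
  · obtain ⟨u, hu, hc, h1, h2⟩ := FracHardy.exists_small hp0 (mul_pos hp0 hα.1) hVloc hgrow hε
    have h3 := hb ⟨u, hu, hc, h1, rfl⟩
    have h4 : 0 ≤ μ * ∫ x, |u x| ^ p / ‖x‖ ^ (p * α) :=
      mul_nonneg hμ0 (integral_nonneg fun x => by positivity)
    linarith
end
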